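/- For every N ≥ 1, the field extension ℚ(j, {j∘g}_{g∈G_N}) of ℚ(j) is Galois with Galois group Gal(ℚ(j, {j∘g}_{g∈G_N}) / ℚ(j)) ≅ PGL₂(ℤ/Nℤ), and Gal(ℚ^cyc(j, {j∘g}_{g∈G_N}) / ℚ^cyc(j)) ≅ PSL₂(ℤ/Nℤ), where ℚ^cyc is the field generated by all roots of unity. -/

import Mathlib

set_option synthInstance.maxHeartbeats 800000
set_option maxHeartbeats 1600000
noncomputable section
open UpperHalfPlane Matrix MatrixGroups Classical

namespace JPaper

/-! ### The group `G = GL₂⁺(ℚ)` modulo scalars and its action on `ℍ` -/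

/-- `GL₂⁺(ℚ)`, the group of 2×2 rational matrices with positive determinant. -/
abbrev GL2QPos : Type := Matrix.GLPos (Fin 2) ℚ

lemma map_mem_glpos (g : GL2QPos) :
    (Matrix.GeneralLinearGroup.map (algebraMap ℚ ℝ) : GL (Fin 2) ℚ →* GL (Fin 2) ℝ) g ∈
      Matrix.GLPos (Fin 2) ℝ := by
  have hg := g.2
  rw [Matrix.mem_glpos] at hg ⊢
  rw [Matrix.GeneralLinearGroup.val_det_apply] at hg ⊢
  show (0:ℝ) < Matrix.det _
  have : ((Matrix.GeneralLinearGroup.map (algebraMap ℚ ℝ) (g : GL (Fin 2) ℚ) :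
      GL (Fin 2) ℝ) : Matrix (Fin 2) (Fin 2) ℝ) = ((g : GL (Fin 2) ℚ) :
      Matrix (Fin 2) (Fin 2) ℚ).map (algebraMap ℚ ℝ) := rfl
  rw [this, ← RingHom.mapMatrix_apply, ← RingHom.map_det]
  simpa using (Rat.cast_pos (K := ℝ)).mpr hg

/-- The homomorphism `GL₂⁺(ℚ) →* GL₂⁺(ℝ)` induced by `ℚ ⊆ ℝ`. -/
def toGLPosR : GL2QPos →* Matrix.GLPos (Fin 2) ℝ :=
  MonoidHom.codRestrict
    ((Matrix.GeneralLinearGroup.map (algebraMap ℚ ℝ)).comp (Matrix.GLPos (Fin 2) ℚ).subtype)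
    (Matrix.GLPos (Fin 2) ℝ) (fun g => map_mem_glpos g)

/-- `G := GL₂⁺(ℚ)ᵃᵈ`, i.e. `GL₂⁺(ℚ)` modulo its centre (the scalar matrices). -/
abbrev GQ : Type := GL2QPos ⧸ Subgroup.center GL2QPos

/-- The action of an element of `G = GL₂⁺(ℚ)` modulo scalars on the upper half plane,
via a choice of representative (the centre acts trivially on `ℍ`, so this recovers the
natural action by Möbius transformations). -/
def gqSmul (g : GQ) (τ : ℍ) : ℍ := toGLPosR g.out • τ

/-- The image of `SL₂(ℤ)` in `GL₂⁺(ℚ)`. -/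
def sl2ZtoGLQ (γ : Matrix.SpecialLinearGroup (Fin 2) ℤ) : GL2QPos :=
  ⟨Matrix.SpecialLinearGroup.toGL
      (Matrix.SpecialLinearGroup.map (Int.castRingHom ℚ) γ), by
    rw [Matrix.mem_glpos, Matrix.GeneralLinearGroup.val_det_apply]
    show (0:ℚ) < Matrix.det _
    have : ((Matrix.SpecialLinearGroup.toGL
        (Matrix.SpecialLinearGroup.map (Int.castRingHom ℚ) γ) : GL (Fin 2) ℚ) :
        Matrix (Fin 2) (Fin 2) ℚ).det = 1 :=
      (Matrix.SpecialLinearGroup.map (Int.castRingHom ℚ) γ).2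
    rw [this]; norm_num⟩

/-- The image of `SL₂(ℤ)` in `G = GL₂⁺(ℚ)` modulo scalars. -/
def sl2ZtoGQ (γ : Matrix.SpecialLinearGroup (Fin 2) ℤ) : GQ :=
  QuotientGroup.mk (sl2ZtoGLQ γ)

/-! ### The modular `j`-function and special points -/

/-- The classical modular `j`-function on the upper half plane, defined via the
Eisenstein series `g₂, g₃` of the lattice `ℤτ + ℤ`. -/
def jFunction (τ : ℍ) : ℂ :=
  let g2 : ℂ := 60 * ∑' p : ℤ × ℤ,
    if p = 0 then 0 else (((p.1 : ℂ) * (τ : ℂ) + (p.2 : ℂ)) ^ 4)⁻¹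
  let g3 : ℂ := 140 * ∑' p : ℤ × ℤ,
    if p = 0 then 0 else (((p.1 : ℂ) * (τ : ℂ) + (p.2 : ℂ)) ^ 6)⁻¹
  1728 * g2 ^ 3 / (g2 ^ 3 - 27 * g3 ^ 2)

/-- A point of `ℍ` is special (a CM point) if it is fixed by some nontrivial element
of `G = GL₂⁺(ℚ)` modulo scalars. -/
def IsSpecial (τ : ℍ) : Prop := ∃ g : GQ, g ≠ 1 ∧ gqSmul g τ = τ

/-- The set of special points of `ℍ`. -/
def SpecialSet : Set ℍ := {τ | IsSpecial τ}

/-- The set `j(S) ⊆ ℂ` of singular moduli, i.e. `j`-values of special points. -/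
def jSpecialValues : Set ℂ := jFunction '' SpecialSet

/-- The subfield `ℚ(j(S))` of `ℂ` generated by the singular moduli. -/
def QjS : Subfield ℂ := Subfield.closure jSpecialValues

/-- An integral matrix is primitive if the gcd of its entries is 1. -/
def IsPrimitiveIntMatrix (A : Matrix (Fin 2) (Fin 2) ℤ) : Prop :=
  Int.gcd (Int.gcd (A 0 0) (A 0 1)) (Int.gcd (A 1 0) (A 1 1)) = 1

/-- `G_N`: the set of elements of `G` which, after multiplying through by an integer to
clear denominators in all entries, have determinant `N`. -/
def GQdet (N : ℕ) : Set GQ :=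
  {g | ∃ A : Matrix (Fin 2) (Fin 2) ℤ, IsPrimitiveIntMatrix A ∧ A.det = (N : ℤ) ∧
    ∃ c : ℚ, ((g.out : GL (Fin 2) ℚ) : Matrix (Fin 2) (Fin 2) ℚ) =
      c • A.map (fun x => (x : ℚ))}

/-- The `N`-th classical modular polynomial `Φ_N ∈ ℤ[X,Y]`, characterised by the property
that `Φ_N(z,w) = 0` iff `z` and `w` are the `j`-invariants of elliptic curves related by a
cyclic `N`-isogeny, i.e. iff `w = j(gτ)`, `z = j(τ)` for some `τ ∈ ℍ` and `g ∈ G_N`. -/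
def modularPoly (N : ℕ) : MvPolynomial (Fin 2) ℤ :=
  if h : ∃ P : MvPolynomial (Fin 2) ℤ, P ≠ 0 ∧ ∀ z w : ℂ,
      (MvPolynomial.aeval ![z, w]) P = 0 ↔
        ∃ (τ : ℍ) (g : GQ), g ∈ GQdet N ∧ jFunction τ = z ∧ jFunction (gqSmul g τ) = w
  then h.choose else 0


/-- The modular polynomial `Φ_N(X, t) ∈ F(t)[X]` over the rational function field `F(t)`,
where `t` plays the role of the modular function `j` (so that `F(t) ≅ F(j)` is the function
field of the modular curve `Y₀'(1)`, and the splitting field of `Φ_N(X, j)` over `F(j)` is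
the normal closure `F(j, {j∘g}_{g ∈ G_N})`). -/
def modularPolyOneVar (F : Type) [Field F] (N : ℕ) : Polynomial (RatFunc F) :=
  MvPolynomial.aeval ![Polynomial.X, Polynomial.C RatFunc.X] (modularPoly N)

/-- The set of all roots of unity in `ℂ`. -/
def rootsOfUnitySet : Set ℂ := {z | ∃ n : ℕ, 0 < n ∧ z ^ n = 1}

/-- `ℚ^cyc`, the subfield of `ℂ` generated by all roots of unity. -/
def Qcyc : Subfield ℂ := Subfield.closure rootsOfUnitySet

/-- `PGL₂(ℤ/Nℤ)`. -/
abbrev PGL2ZmodN (N : ℕ) : Type :=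
  GL (Fin 2) (ZMod N) ⧸ Subgroup.center (GL (Fin 2) (ZMod N))

/-- `PSL₂(ℤ/Nℤ)`. -/
abbrev PSL2ZmodN (N : ℕ) : Type :=
  Matrix.SpecialLinearGroup (Fin 2) (ZMod N) ⧸
    Subgroup.center (Matrix.SpecialLinearGroup (Fin 2) (ZMod N))

end JPaper

/-!
Over the algebraic closure `k` of `F` in `ℂ`, the functions `j` and `j ∘ g`, `g ∈ G_N`, have Laurent
expansions in `exp (2πiτ/N)`, so `F(j)` and the roots of `Φ_N(X, j)` live in the field of Laurent
series over `k`. The function `j ∘ g` depends only on the left coset of `g` under `SL₂(ℤ)`, that is,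
on a unimodular row over `ℤ/N` up to units, namely the row that spans the row space of `g` modulo
`N`; the group `GL₂(ℤ/N)` permutes these rows.

Every element of `GL₂(ℤ/N)` is a product of some `diag(1, u)` and the reduction of a matrix in
`SL₂(ℤ)`. The second factor acts on the roots by substitution in `τ`, the first one through the
automorphisms of `k / F` applied to the coefficients of Laurent series, as long as `u` is a value of
the cyclotomic character of `F`. Both preserve the algebraic relations between the roots. Conversely
a polynomial in the roots that is invariant under both is a holomorphic function of level one,
meromorphic at the cusp, with coefficients in `F`, hence a polynomial in `j` over `F`. The Galois
group is therefore the group of matrices whose determinant is a value of the cyclotomic character,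
modulo the scalars, which are the matrices that fix all rows up to units. The character is
surjective for `F = ℚ` and trivial for `F = ℚ^cyc`.
-/

namespace JPaper

open ModularForm EisensteinSeries Filter Topology
open Function.Periodic (qParam)
open scoped Manifold

/-! ### Power series expansions in `q` -/

section QExpansion

variable {k : Type*} [Field k] [Algebra k ℂ] {h : ℝ} {f g : ℍ → ℂ} {p r : PowerSeries k}

/-- `f` is the sum of the power series `p` in `q = exp (2 π i τ / h)` on the whole of `ℍ`. The
coefficients lie in a field `k` with a map to `ℂ`, because their field of definition matters. -/
def HasQExpansion (h : ℝ) (f : ℍ → ℂ) (p : PowerSeries k) : Prop :=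
  ∀ τ : ℍ, HasSum (fun n ↦ algebraMap k ℂ (p.coeff n) * qParam h τ ^ n) (f τ)

lemma hasQExpansion_map_algebraMap_iff :
    HasQExpansion h f (p.map (algebraMap k ℂ)) ↔ HasQExpansion h f p := by
  simp only [HasQExpansion, PowerSeries.coeff_map, Algebra.algebraMap_self, RingHom.id_apply]

namespace HasQExpansion

lemma monomial (h : ℝ) (n : ℕ) (a : k) :
    HasQExpansion h (fun τ ↦ algebraMap k ℂ a * qParam h τ ^ n) (PowerSeries.monomial n a) :=
  fun τ ↦ by
    convert! hasSum_single (f := fun m ↦ algebraMap k ℂ ((PowerSeries.monomial n a).coeff m) *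
      qParam h τ ^ m) n fun m hm ↦ ?_ using 1
    · simp
    · simp [PowerSeries.coeff_monomial, hm]

lemma const (h : ℝ) (a : k) : HasQExpansion h (fun _ ↦ algebraMap k ℂ a) (PowerSeries.C a) := by
  simpa using monomial h 0 a

lemma qParam_pow (h : ℝ) (n : ℕ) :
    HasQExpansion h (fun τ ↦ qParam h τ ^ n) (PowerSeries.X ^ n : PowerSeries k) := by
  simpa [PowerSeries.X_pow_eq] using monomial h n (1 : k)

lemma sub (hf : HasQExpansion h f p) (hg : HasQExpansion h g r) :
    HasQExpansion h (f - g) (p - r) :=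
  fun τ ↦ by simpa [sub_mul] using (hf τ).sub (hg τ)

lemma mul (hf : HasQExpansion h f p) (hg : HasQExpansion h g r) :
    HasQExpansion h (f * g) (p * r) := fun τ ↦ by
  have hf' := (hf τ).summable.norm
  have hg' := (hg τ).summable.norm
  have hfg := (summable_norm_sum_mul_antidiagonal_of_summable_norm hf' hg').of_norm.hasSum
  rw [← tsum_mul_tsum_eq_tsum_sum_antidiagonal_of_summable_norm hf' hg', (hf τ).tsum_eq,
    (hg τ).tsum_eq] at hfg
  convert! hfg using 2 with n
  rw [PowerSeries.coeff_mul, map_sum, Finset.sum_mul]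
  refine Finset.sum_congr rfl fun x hx ↦ ?_
  rw [map_mul, ← Finset.HasAntidiagonal.mem_antidiagonal.1 hx, pow_add]
  ring

lemma pow (hf : HasQExpansion h f p) (n : ℕ) : HasQExpansion h (f ^ n) (p ^ n) := by
  induction n with
  | zero => simpa using! const h (1 : k)
  | succ n ih => simpa only [pow_succ] using ih.mul hf

lemma of_X_mul (hf : HasQExpansion h (fun τ ↦ qParam h τ * f τ) (PowerSeries.X * p)) :
    HasQExpansion h f p := fun τ ↦ by
  have hq : qParam h (τ : ℂ) ≠ 0 := Function.Periodic.qParam_ne_zero _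
  have hsum := (hasSum_nat_add_iff' 1).2 (hf τ)
  simp only [Finset.range_one, Finset.sum_singleton, PowerSeries.coeff_zero_X_mul, map_zero,
    zero_mul, sub_zero, PowerSeries.coeff_succ_X_mul, pow_succ, ← mul_assoc] at hsum
  exact (hasSum_mul_right_iff hq).1 (by simpa only [mul_comm (qParam h τ)] using hsum)

lemma isBoundedAtImInfty (hh : 0 < h) (hf : HasQExpansion h f p) : IsBoundedAtImInfty f :=
  isBoundedAtImInfty_of_hasSum_qExpansion hh hf

lemma tendsto_atImInfty (hh : 0 < h) (hf : HasQExpansion h f p) :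
    Tendsto f atImInfty (𝓝 (algebraMap k ℂ (PowerSeries.constantCoeff p))) := by
  set a := PowerSeries.constantCoeff p
  obtain ⟨r, hr⟩ : PowerSeries.X ∣ p - PowerSeries.C a :=
    PowerSeries.X_dvd_iff.2 (by simp [a])
  have hq (τ : ℍ) : qParam h (τ : ℂ) ≠ 0 := Function.Periodic.qParam_ne_zero _
  have hbdd : IsBoundedAtImInfty fun τ ↦ (f τ - algebraMap k ℂ a) / qParam h τ := by
    refine isBoundedAtImInfty hh (of_X_mul (p := r) ?_)
    simpa only [mul_div_cancel₀ _ (hq _), ← hr] using! hf.sub (const h a)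
  have hlim : Tendsto (fun τ ↦ f τ - algebraMap k ℂ a) atImInfty (𝓝 0) := by
    refine Tendsto.congr (fun τ ↦ mul_div_cancel₀ _ (hq τ))
      ((Asymptotics.isLittleO_one_iff ℝ).1 ?_)
    simpa using ((Asymptotics.isLittleO_one_iff ℝ).2 (qParam_tendsto_atImInfty hh)).mul_isBigO hbdd
  simpa using hlim.add_const (algebraMap k ℂ a)

lemma eq_zero_of_zero (hh : 0 < h) (hp : HasQExpansion h 0 p) : p = 0 := by
  have key (n : ℕ) : ∀ p : PowerSeries k, HasQExpansion h 0 p → p.coeff n = 0 := by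
    have constantCoeff_eq_zero {p : PowerSeries k} (hp : HasQExpansion h 0 p) :
        PowerSeries.constantCoeff p = 0 := by
      have hlim : Tendsto (0 : ℍ → ℂ) atImInfty (𝓝 0) := tendsto_const_nhds
      exact (map_eq_zero _).1 (tendsto_nhds_unique (hp.tendsto_atImInfty hh) hlim)
    induction n with
    | zero => exact fun p hp ↦ by simpa using constantCoeff_eq_zero hp
    | succ n ih =>
      intro p hp
      obtain ⟨r, rfl⟩ := PowerSeries.X_dvd_iff.2 (constantCoeff_eq_zero hp)
      rw [PowerSeries.coeff_succ_X_mul]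
      exact ih r (of_X_mul (by simpa using! hp))
  exact PowerSeries.ext fun n ↦ key n p hp

lemma unique (hh : 0 < h) (hp : HasQExpansion h f p) (hr : HasQExpansion h f r) : p = r :=
  sub_eq_zero.1 (eq_zero_of_zero hh (by simpa using hp.sub hr))

end HasQExpansion

end QExpansion

lemma qParam_vadd (h : ℝ) (τ : ℍ) : qParam h (h +ᵥ τ : ℍ) = qParam h τ := by
  rcases eq_or_ne h 0 with rfl | hh
  · simp [qParam]
  · have : (h : ℂ) ≠ 0 := Complex.ofReal_ne_zero.2 hh
    rw [qParam, qParam, coe_vadd, mul_add, add_div, Complex.exp_add, mul_div_cancel_right₀ _ this,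
      Complex.exp_two_pi_mul_I, one_mul]

lemma qParam_natCast_one_vadd {N : ℕ} (hN : N ≠ 0) (τ : ℍ) : qParam N ((1 : ℝ) +ᵥ τ : ℍ) =
    Complex.exp (2 * Real.pi * Complex.I / N) * qParam N τ := by
  rw [qParam, qParam, ← Complex.exp_add, coe_vadd]
  congr 1
  push_cast
  field_simp

lemma qParam_natCast_pow {N : ℕ} (hN : N ≠ 0) (τ : ℍ) : qParam N τ ^ N = qParam 1 τ := by
  rw [qParam, qParam, ← Complex.exp_nat_mul]
  congr 1
  push_cast
  field_simp

lemma mdifferentiable_qParam (h : ℝ) : MDiff (fun τ : ℍ ↦ qParam h τ) := by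
  rw [UpperHalfPlane.mdifferentiable_iff]
  refine DifferentiableOn.congr (f := qParam h)
    Function.Periodic.differentiable_qParam.differentiableOn fun z hz ↦ ?_
  simp [ofComplex_apply_of_im_pos hz]

lemma periodic_comp_ofComplex_of_vadd {h : ℝ} {f : ℍ → ℂ} (hf : ∀ τ : ℍ, f (h +ᵥ τ) = f τ) :
    Function.Periodic (f ∘ ofComplex) h := by
  intro w
  by_cases! hw : 0 < w.im
  · have hw' : 0 < (w + h).im := by simp [hw]
    simp only [Function.comp_apply, ofComplex_apply_of_im_pos hw', ofComplex_apply_of_im_pos hw]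
    convert! hf ⟨w, hw⟩ using 2
    ext
    simp [add_comm]
  · have hw' : (w + h).im ≤ 0 := by simpa using hw
    simp only [Function.comp_apply, ofComplex_apply_of_im_nonpos hw',
      ofComplex_apply_of_im_nonpos hw]

lemma hasQExpansion_qExpansion {h : ℝ} (hh : 0 < h) {f : ℍ → ℂ} (hf : MDiff f)
    (hper : ∀ τ : ℍ, f (h +ᵥ τ) = f τ) (hbdd : IsBoundedAtImInfty f) :
    HasQExpansion h f (qExpansion h f) :=
  fun τ ↦ UpperHalfPlane.hasSum_qExpansion hh (periodic_comp_ofComplex_of_vadd hper) hf hbdd τ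

lemma mdifferentiable_div {f g : ℍ → ℂ} (hf : MDiff f) (hg : MDiff g) (h0 : ∀ τ, g τ ≠ 0) :
    MDiff (fun τ ↦ f τ / g τ) := by
  rw [UpperHalfPlane.mdifferentiable_iff] at *
  exact hf.div hg fun z _ ↦ h0 _

theorem exists_eq_const_of_forall_smul_eq {f : ℍ → ℂ} (hf : MDiff f)
    (hinv : ∀ (γ : SL(2, ℤ)) τ, f (γ • τ) = f τ) (hbdd : IsBoundedAtImInfty f) :
    ∃ c, ∀ τ, f τ = c := by
  have hslash (γ : SL(2, ℤ)) : f ∣[(0 : ℤ)] γ = f := by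
    ext τ
    rw [slash_action_eq'_iff, hinv]
    simp
  let F : ModularForm 𝒮ℒ 0 :=
    { toFun := f
      slash_action_eq' := by
        rintro _ ⟨γ, rfl⟩
        exact hslash γ
      holo' := hf
      bdd_at_cusps' := fun {c} hc ↦ by
        rw [Subgroup.IsArithmetic.isCusp_iff_isCusp_SL2Z] at hc
        rw [OnePoint.isBoundedAt_iff_forall_SL2Z hc]
        intro γ _
        rw [hslash]
        exact hbdd }
  obtain ⟨c, hc⟩ := ModularFormClass.levelOne_weight_zero_const F
  exact ⟨c, fun τ ↦ congr_fun hc τ⟩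

/-! ### The `j`-function -/

lemma tsum_lattice_eq_riemannZeta_mul_E {k : ℕ} (hk : 3 ≤ k) (τ : ℍ) :
    ∑' p : ℤ × ℤ, (if p = 0 then 0 else (((p.1 : ℂ) * (τ : ℂ) + (p.2 : ℂ)) ^ k)⁻¹) =
      2 * riemannZeta k * E hk τ := by
  calc _ = ∑' v : Fin 2 → ℤ, eisSummand k v τ := by
        rw [← (finTwoArrowEquiv ℤ).symm.tsum_eq]
        refine tsum_congr fun p ↦ ?_
        split_ifs with hp
        · simp [hp, eisSummand, show k ≠ 0 by omega]
        · simp [eisSummand]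
    _ = riemannZeta k * eisensteinSeries (N := 1) 0 k τ :=
        tsum_eisSummand_eq_riemannZeta_mul_eisensteinSeries hk τ
    _ = 2 * riemannZeta k * ((1 / 2 : ℂ) * eisensteinSeries (N := 1) 0 k τ) := by ring

lemma riemannZeta_six : riemannZeta 6 = (Real.pi : ℂ) ^ 6 / 945 := by
  have hzeta := riemannZeta_two_mul_nat (k := 3) (by norm_num)
  have hbernoulli : bernoulli 6 = 1 / 42 := by decide +kernel
  norm_num [hbernoulli, Nat.factorial] at hzeta
  rw [hzeta]
  ring

theorem jFunction_eq_div_discriminant (τ : ℍ) : jFunction τ = E₄ τ ^ 3 / discriminant τ := by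
  have hG₄ := tsum_lattice_eq_riemannZeta_mul_E (k := 4) (by norm_num) τ
  have hG₆ := tsum_lattice_eq_riemannZeta_mul_E (k := 6) (by norm_num) τ
  simp only [Nat.cast_ofNat] at hG₄ hG₆
  have hpi : (Real.pi : ℂ) ≠ 0 := by exact_mod_cast Real.pi_ne_zero
  have hdisc : (60 * (2 * ((Real.pi : ℂ) ^ 4 / 90) * E₄ τ)) ^ 3 -
      27 * (140 * (2 * ((Real.pi : ℂ) ^ 6 / 945) * E₆ τ)) ^ 2 =
      64 / 27 * (Real.pi : ℂ) ^ 12 * (1728 * discriminant τ) := by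
    rw [discriminant_eq_E₄_cube_sub_E₆_sq]
    ring
  rw [jFunction, hG₄, hG₆, riemannZeta_four, riemannZeta_six, hdisc]
  field_simp [discriminant_ne_zero τ]
  ring

theorem jFunction_smul (γ : SL(2, ℤ)) (τ : ℍ) : jFunction (γ • τ) = jFunction τ := by
  have hE₄ : E₄ (γ • τ) = _ :=
    (slash_action_eq'_iff 4 E₄ γ τ).1 (congr_fun (E₄.slash_action_eq' _ ⟨γ, rfl⟩) τ)
  have hΔ : discriminant (γ • τ) = _ :=
    (slash_action_eq'_iff 12 discriminant γ τ).1
      (congr_fun (CuspForm.discriminant.slash_action_eq' _ ⟨γ, rfl⟩) τ)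
  have hden : ((γ 1 0 : ℂ) * τ + γ 1 1) ≠ 0 := by
    simpa [denom] using denom_ne_zero γ τ
  have hΔ0 := discriminant_ne_zero τ
  rw [jFunction_eq_div_discriminant, jFunction_eq_div_discriminant, hE₄, hΔ, zpow_ofNat,
    zpow_ofNat]
  field_simp

lemma jFunction_one_vadd (τ : ℍ) : jFunction ((1 : ℝ) +ᵥ τ) = jFunction τ := by
  rw [← modular_T_smul, jFunction_smul]

theorem mdifferentiable_jFunction : MDiff jFunction := by
  rw [funext jFunction_eq_div_discriminant]
  exact mdifferentiable_div (MDifferentiable.pow E₄.holo' 3) CuspForm.discriminant.holo'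
    discriminant_ne_zero

lemma isBoundedAtImInfty_qParam_mul_jFunction :
    IsBoundedAtImInfty (fun τ : ℍ ↦ qParam 1 τ * jFunction τ) := by
  have hqΔ : (fun τ : ℍ ↦ qParam 1 τ) =O[atImInfty] discriminant :=
    .trans (.of_norm_le fun τ ↦ by simp [Function.Periodic.norm_qParam]) exp_isBigO_discriminant
  have hE₄ : (fun τ : ℍ ↦ E₄ τ) =O[atImInfty] (fun _ ↦ (1 : ℂ)) :=
    (ModularFormClass.bdd_at_infty E₄).trans (Asymptotics.isBigO_of_le _ fun _ ↦ by simp)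
  have hΔ : (fun τ : ℍ ↦ (discriminant τ)⁻¹) =O[atImInfty] fun τ ↦ (discriminant τ)⁻¹ :=
    Asymptotics.isBigO_refl _ _
  refine (((hqΔ.mul hΔ).mul (hE₄.pow 3)).congr (fun τ ↦ ?_) fun τ ↦ ?_).trans
    (Asymptotics.isBigO_of_le (g := (1 : ℍ → ℝ)) (f := fun _ ↦ (1 : ℂ)) _ fun _ ↦ by simp)
  · rw [jFunction_eq_div_discriminant]
    ring
  · simp [discriminant_ne_zero τ]

/-- The `q`-expansion `1 - (2k / B_k) ∑ σ_{k-1}(m) q^m` of the normalised Eisenstein series of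
weight `k`, with its rational coefficients. -/
def eisensteinQSeries (k : ℕ) : PowerSeries ℚ :=
  .mk fun m ↦ if m = 0 then 1 else -(2 * k / bernoulli k) * ArithmeticFunction.sigma (k - 1) m

/-- The `q`-expansion of the modular discriminant, with its rational coefficients. -/
def discriminantQSeries : PowerSeries ℚ :=
  PowerSeries.C (1728⁻¹ : ℚ) * (eisensteinQSeries 4 ^ 3 - eisensteinQSeries 6 ^ 2)

/-- The `q`-expansion of `q · j`, with its rational coefficients. -/
def qjSeries : PowerSeries ℚ :=
  eisensteinQSeries 4 ^ 3 * (PowerSeries.mk fun n ↦ discriminantQSeries.coeff (n + 1))⁻¹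

lemma constantCoeff_eisensteinQSeries (k : ℕ) :
    PowerSeries.constantCoeff (eisensteinQSeries k) = 1 := by
  simp [eisensteinQSeries, ← PowerSeries.coeff_zero_eq_constantCoeff_apply]

theorem hasQExpansion_E {k : ℕ} (hk : 3 ≤ k) (hk2 : Even k) :
    HasQExpansion 1 (E hk) (eisensteinQSeries k) := by
  rw [← hasQExpansion_map_algebraMap_iff]
  have hmap : (eisensteinQSeries k).map (algebraMap ℚ ℂ) = qExpansion 1 (E hk) := by
    ext m
    rw [E_qExpansion_coeff hk hk2]
    split_ifs with hm <;> simp [eisensteinQSeries, hm]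
  rw [hmap]
  exact fun τ ↦ ModularForm.hasSum_qExpansion (E hk) one_pos one_mem_strictPeriods_SL τ

theorem hasQExpansion_discriminant : HasQExpansion 1 discriminant discriminantQSeries := by
  convert! (HasQExpansion.const 1 (1728⁻¹ : ℚ)).mul
    (((hasQExpansion_E (k := 4) (by norm_num) ⟨2, rfl⟩).pow 3).sub
      ((hasQExpansion_E (k := 6) (by norm_num) ⟨3, rfl⟩).pow 2)) using 1
  ext τ
  simp only [discriminant_eq_E₄_cube_sub_E₆_sq, Pi.mul_apply, Pi.sub_apply, Pi.pow_apply, map_inv₀,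
    map_ofNat]
  ring

lemma map_discriminantQSeries :
    discriminantQSeries.map (algebraMap ℚ ℂ) = qExpansion 1 discriminant :=
  (hasQExpansion_map_algebraMap_iff.2 hasQExpansion_discriminant).unique one_pos fun τ ↦
    ModularForm.hasSum_qExpansion CuspForm.discriminant one_pos one_mem_strictPeriods_SL τ

lemma constantCoeff_discriminantQSeries :
    PowerSeries.constantCoeff discriminantQSeries = 0 := by
  simp [discriminantQSeries, constantCoeff_eisensteinQSeries]

lemma coeff_one_discriminantQSeries : discriminantQSeries.coeff 1 = 1 :=
  (algebraMap ℚ ℂ).injective <| by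
    rw [← PowerSeries.coeff_map, map_discriminantQSeries, discriminant_qExpansion_coeff_one,
      map_one]

lemma discriminantQSeries_mul_qjSeries :
    discriminantQSeries * qjSeries = PowerSeries.X * eisensteinQSeries 4 ^ 3 := by
  obtain ⟨u, hu_def⟩ : ∃ u, u = PowerSeries.mk fun n ↦ discriminantQSeries.coeff (n + 1) :=
    ⟨_, rfl⟩
  have hu : discriminantQSeries = PowerSeries.X * u := by
    simpa [constantCoeff_discriminantQSeries, hu_def] using
      discriminantQSeries.eq_X_mul_shift_add_const
  have hu0 : PowerSeries.constantCoeff u ≠ 0 := by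
    rw [hu_def, ← PowerSeries.coeff_zero_eq_constantCoeff_apply, PowerSeries.coeff_mk, zero_add,
      coeff_one_discriminantQSeries]
    exact one_ne_zero
  rw [qjSeries, ← hu_def, hu, mul_assoc, mul_left_comm u, PowerSeries.mul_inv_cancel u hu0, mul_one]

lemma constantCoeff_qjSeries : PowerSeries.constantCoeff qjSeries = 1 := by
  simp only [qjSeries, map_mul, map_pow, constantCoeff_eisensteinQSeries, one_pow, one_mul,
    PowerSeries.constantCoeff_inv]
  rw [← PowerSeries.coeff_zero_eq_constantCoeff_apply, PowerSeries.coeff_mk, zero_add,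
    coeff_one_discriminantQSeries, inv_one]

theorem hasQExpansion_qParam_mul_jFunction :
    HasQExpansion 1 (fun τ ↦ qParam 1 τ * jFunction τ) qjSeries := by
  have hqj := hasQExpansion_qExpansion one_pos
    ((mdifferentiable_qParam 1).mul mdifferentiable_jFunction)
    (fun τ ↦ congr_arg₂ (· * ·) (qParam_vadd 1 τ) (jFunction_one_vadd τ))
    isBoundedAtImInfty_qParam_mul_jFunction
  have hprod : HasQExpansion 1
      (discriminant * fun τ : ℍ ↦ qParam 1 τ * jFunction τ)
      (PowerSeries.X * eisensteinQSeries 4 ^ 3) := by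
    convert! (HasQExpansion.qParam_pow 1 1).mul
      ((hasQExpansion_E (k := 4) (by norm_num) ⟨2, rfl⟩).pow 3) using 1
    · ext τ
      simp only [Pi.mul_apply, Pi.pow_apply, jFunction_eq_div_discriminant, pow_one]
      field_simp [discriminant_ne_zero τ]
    · rw [pow_one]
  rw [← discriminantQSeries_mul_qjSeries, ← hasQExpansion_map_algebraMap_iff, map_mul] at hprod
  have heq := (hasQExpansion_map_algebraMap_iff.2 hasQExpansion_discriminant).mul hqj |>.unique
    one_pos hprod
  have hne : discriminantQSeries.map (algebraMap ℚ ℂ) ≠ 0 := fun h ↦ by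
    simpa [coeff_one_discriminantQSeries] using congr_arg (PowerSeries.coeff 1) h
  rwa [← hasQExpansion_map_algebraMap_iff, ← mul_left_cancel₀ hne heq]

lemma tendsto_qParam_mul_jFunction :
    Tendsto (fun τ : ℍ ↦ qParam 1 τ * jFunction τ) atImInfty (𝓝 1) := by
  simpa [constantCoeff_qjSeries] using
    hasQExpansion_qParam_mul_jFunction.tendsto_atImInfty one_pos

theorem jFunction_surjective : Function.Surjective jFunction := by
  intro c
  by_contra! hc
  have hq := qParam_tendsto_atImInfty (h := 1) one_pos
  have hne (τ : ℍ) : jFunction τ - c ≠ 0 := sub_ne_zero.2 (hc τ)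
  set f : ℍ → ℂ := fun τ ↦ 1 / (jFunction τ - c) with hf
  have hf0 : Tendsto f atImInfty (𝓝 0) := by
    have hlim : Tendsto (fun τ : ℍ ↦ qParam 1 τ / (qParam 1 τ * jFunction τ - qParam 1 τ * c))
        atImInfty (𝓝 0) := by
      simpa using! hq.div (tendsto_qParam_mul_jFunction.sub (hq.mul_const c)) (by simp)
    refine hlim.congr fun τ ↦ ?_
    rw [← mul_sub, div_mul_cancel_left₀ (Function.Periodic.qParam_ne_zero _), ← one_div]
  obtain ⟨a, ha⟩ := exists_eq_const_of_forall_smul_eq (f := f)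
    (mdifferentiable_div mdifferentiable_const
      (mdifferentiable_jFunction.sub mdifferentiable_const) hne)
    (fun γ τ ↦ by simp only [hf, jFunction_smul]) (hf0.isBigO_one ℝ)
  obtain rfl : a = 0 :=
    tendsto_nhds_unique (by simpa only [funext ha] using tendsto_const_nhds) hf0
  exact one_div_ne_zero (hne I) (ha I)

/-! ### Laurent expansions in `q` -/

lemma coeff_single_mul_ofPowerSeries {k : Type*} [Field k] (e : ℕ) (a : k) (p : PowerSeries k) :
    (HahnSeries.single (-e : ℤ) a * HahnSeries.ofPowerSeries ℤ k p).coeff (-e) =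
      a * PowerSeries.constantCoeff p := by
  rw [HahnSeries.coeff_single_mul, sub_self, ← Nat.cast_zero,
    HahnSeries.ofPowerSeries_apply_coeff, PowerSeries.coeff_zero_eq_constantCoeff_apply]

section LaurentExpansion

variable {k : Type*} [Field k] [Algebra k ℂ] {h : ℝ} {m l : ℕ} {f g : ℍ → ℂ} {s t : LaurentSeries k}

/-- `s` is the Laurent expansion of the holomorphic function `f` in `q = exp (2 π i τ / h)`, and
has a pole of order at most `m`. -/
def HasLaurentExpansionLE (h : ℝ) (m : ℕ) (f : ℍ → ℂ) (s : LaurentSeries k) : Prop :=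
  MDiff f ∧ ∃ p : PowerSeries k, s = HahnSeries.single (-m : ℤ) 1 * HahnSeries.ofPowerSeries ℤ k p ∧
    HasQExpansion h (fun τ ↦ qParam h τ ^ m * f τ) p

/-- `s` is the Laurent expansion of the holomorphic function `f` in `q = exp (2 π i τ / h)`. -/
def HasLaurentExpansion (h : ℝ) (f : ℍ → ℂ) (s : LaurentSeries k) : Prop :=
  ∃ m, HasLaurentExpansionLE h m f s

namespace HasLaurentExpansionLE

lemma add_left (hf : HasLaurentExpansionLE h m f s) (l : ℕ) :
    HasLaurentExpansionLE h (l + m) f s := by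
  obtain ⟨hfd, p, rfl, hp⟩ := hf
  refine ⟨hfd, PowerSeries.X ^ l * p, ?_, ?_⟩
  · rw [map_mul, HahnSeries.ofPowerSeries_X_pow, ← mul_assoc, HahnSeries.single_mul_single]
    simp
  · convert! (HasQExpansion.qParam_pow h l).mul hp using 1
    ext τ
    simp [pow_add, mul_assoc]

lemma const (h : ℝ) (a : k) :
    HasLaurentExpansionLE h 0 (fun _ ↦ algebraMap k ℂ a) (HahnSeries.C a) :=
  ⟨mdifferentiable_const, PowerSeries.C a, by simp, by simpa using HasQExpansion.const h a⟩

lemma sub (hf : HasLaurentExpansionLE h m f s) (hg : HasLaurentExpansionLE h m g t) :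
    HasLaurentExpansionLE h m (f - g) (s - t) := by
  obtain ⟨hfd, p, rfl, hp⟩ := hf
  obtain ⟨hgd, r, rfl, hr⟩ := hg
  refine ⟨hfd.sub hgd, p - r, by rw [map_sub, mul_sub], ?_⟩
  convert! hp.sub hr using 1
  ext τ
  simp [mul_sub]

lemma mul (hf : HasLaurentExpansionLE h m f s) (hg : HasLaurentExpansionLE h l g t) :
    HasLaurentExpansionLE h (m + l) (f * g) (s * t) := by
  obtain ⟨hfd, p, rfl, hp⟩ := hf
  obtain ⟨hgd, r, rfl, hr⟩ := hg
  refine ⟨hfd.mul hgd, p * r, ?_, ?_⟩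
  · rw [map_mul, mul_mul_mul_comm, HahnSeries.single_mul_single, mul_one, Nat.cast_add, neg_add]
  · convert! hp.mul hr using 1
    ext τ
    simp only [Pi.mul_apply]
    ring

lemma pow (hf : HasLaurentExpansionLE h m f s) (n : ℕ) :
    HasLaurentExpansionLE h (n * m) (f ^ n) (s ^ n) := by
  induction n with
  | zero => simpa using! const h (1 : k)
  | succ n ih => simpa only [pow_succ, add_mul, one_mul] using ih.mul hf

lemma of_coeff_eq_zero (hf : HasLaurentExpansionLE h (m + 1) f s)
    (hs : s.coeff (-(m + 1 : ℕ)) = 0) : HasLaurentExpansionLE h m f s := by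
  obtain ⟨hfd, p, rfl, hp⟩ := hf
  rw [coeff_single_mul_ofPowerSeries, one_mul] at hs
  obtain ⟨r, rfl⟩ := PowerSeries.X_dvd_iff.2 hs
  refine ⟨hfd, r, ?_, .of_X_mul ?_⟩
  · rw [map_mul, HahnSeries.ofPowerSeries_X, ← mul_assoc, HahnSeries.single_mul_single]
    simp
  · simpa only [pow_succ', mul_assoc] using hp

end HasLaurentExpansionLE

namespace HasLaurentExpansion

lemma const (h : ℝ) (a : k) :
    HasLaurentExpansion h (fun _ ↦ algebraMap k ℂ a) (HahnSeries.C a) :=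
  ⟨0, .const h a⟩

lemma sub (hf : HasLaurentExpansion h f s) (hg : HasLaurentExpansion h g t) :
    HasLaurentExpansion h (f - g) (s - t) := by
  obtain ⟨m, hf⟩ := hf
  obtain ⟨l, hg⟩ := hg
  exact ⟨l + m, (hf.add_left l).sub (add_comm l m ▸ hg.add_left m)⟩

lemma add (hf : HasLaurentExpansion h f s) (hg : HasLaurentExpansion h g t) :
    HasLaurentExpansion h (f + g) (s + t) := by
  convert! hf.sub ((const h (0 : k)).sub hg) using 1
  · ext τ
    simp
  · simp

lemma mul (hf : HasLaurentExpansion h f s) (hg : HasLaurentExpansion h g t) :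
    HasLaurentExpansion h (f * g) (s * t) := by
  obtain ⟨m, hf⟩ := hf
  obtain ⟨l, hg⟩ := hg
  exact ⟨m + l, hf.mul hg⟩

lemma eq_zero_iff (hh : 0 < h) (hf : HasLaurentExpansion h f s) : f = 0 ↔ s = 0 := by
  obtain ⟨m, -, p, rfl, hp⟩ := hf
  rw [mul_eq_zero_iff_left (HahnSeries.single_ne_zero one_ne_zero),
    map_eq_zero_iff _ HahnSeries.ofPowerSeries_injective]
  constructor
  · rintro rfl
    exact HasQExpansion.eq_zero_of_zero hh (by simpa using! hp)
  · rintro rfl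
    ext τ
    have hzero : HasSum
        (fun n ↦ algebraMap k ℂ ((0 : PowerSeries k).coeff n) * qParam h τ ^ n) 0 := by simp
    exact (mul_eq_zero_iff_left (pow_ne_zero m (Function.Periodic.qParam_ne_zero _))).1
      ((hp τ).unique hzero)

lemma unique_right (hh : 0 < h) (hs : HasLaurentExpansion h f s) (ht : HasLaurentExpansion h f t) :
    s = t :=
  sub_eq_zero.1 (((hs.sub ht).eq_zero_iff hh).1 (sub_self f))

lemma unique_left (hh : 0 < h) (hf : HasLaurentExpansion h f s) (hg : HasLaurentExpansion h g s) :
    f = g :=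
  sub_eq_zero.1 (((hf.sub hg).eq_zero_iff hh).2 (sub_self s))

end HasLaurentExpansion

end LaurentExpansion

section MapCoeff

variable {k k' : Type*} [Field k] [Field k'] (σ : k →+* k')

/-- The homomorphism of rings of Laurent series induced by a homomorphism of coefficient fields. -/
def mapCoeff : LaurentSeries k →+* LaurentSeries k' where
  toFun s := s.map σ
  map_one' := HahnSeries.map_one σ.toMonoidWithZeroHom
  map_mul' _ _ := HahnSeries.map_mul (σ : k →ₙ+* k')
  map_zero' := HahnSeries.map_zero (σ : ZeroHom k k')
  map_add' _ _ := HahnSeries.map_add (σ : k →+ k')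

lemma coeff_mapCoeff (s : LaurentSeries k) (n : ℤ) : (mapCoeff σ s).coeff n = σ (s.coeff n) := rfl

lemma mapCoeff_single (n : ℤ) (a : k) :
    mapCoeff σ (HahnSeries.single n a) = HahnSeries.single n (σ a) :=
  HahnSeries.map_single (σ : ZeroHom k k')

lemma mapCoeff_C (a : k) : mapCoeff σ (HahnSeries.C a) = HahnSeries.C (σ a) :=
  HahnSeries.map_C a σ

lemma mapCoeff_ofPowerSeries (p : PowerSeries k) :
    mapCoeff σ (HahnSeries.ofPowerSeries ℤ k p) = HahnSeries.ofPowerSeries ℤ k' (p.map σ) := by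
  ext n
  rw [coeff_mapCoeff]
  rcases le_or_gt 0 n with hn | hn
  · lift n to ℕ using hn
    simp only [HahnSeries.ofPowerSeries_apply_coeff, PowerSeries.coeff_map]
  · have hn' : n ∉ Set.range (Nat.castOrderEmbedding (α := ℤ)) := by
      rintro ⟨m, rfl⟩
      exact hn.not_ge (Int.natCast_nonneg m)
    simp only [HahnSeries.ofPowerSeries_apply, HahnSeries.embDomain_of_notMem_range hn', map_zero]

end MapCoeff

/-! ### The expansion of `j` -/

section JExpansion

variable {k : Type*} [Field k] {z w : k} {d e : ℕ}

/-- The power series obtained from the `q`-expansion of `q · j` by substituting `z · X ^ e`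
for `q`. -/
def qjSubst (z : k) (e : ℕ) : PowerSeries k :=
  .mk fun n ↦ if e ∣ n then (qjSeries.coeff (n / e) : k) * z ^ (n / e) else 0

/-- The Laurent series obtained from the `q`-expansion of `j` by substituting `z · X ^ e`
for `q`. -/
def jSubst (z : k) (e : ℕ) : LaurentSeries k :=
  HahnSeries.single (-e : ℤ) z⁻¹ * HahnSeries.ofPowerSeries ℤ k (qjSubst z e)

lemma constantCoeff_qjSubst (z : k) (e : ℕ) : PowerSeries.constantCoeff (qjSubst z e) = 1 := by
  rw [← PowerSeries.coeff_zero_eq_constantCoeff_apply]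
  simp [qjSubst, constantCoeff_qjSeries]

lemma coeff_jSubst (z : k) (e : ℕ) : (jSubst z e).coeff (-e) = z⁻¹ := by
  rw [jSubst, coeff_single_mul_ofPowerSeries, constantCoeff_qjSubst, mul_one]

lemma coeff_jSubst_of_lt {n : ℤ} (hn : n < -e) : (jSubst z e).coeff n = 0 := by
  rw [jSubst, HahnSeries.coeff_single_mul, HahnSeries.ofPowerSeries_apply,
    HahnSeries.embDomain_of_notMem_range, mul_zero]
  rintro ⟨m, hm⟩
  simp only [Nat.castOrderEmbedding_apply] at hm
  omega

lemma coeff_jSubst_one_pow (e n : ℕ) : (jSubst (1 : k) e ^ n).coeff (-(n * e : ℕ)) = 1 := by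
  have hpow : jSubst (1 : k) e ^ n = HahnSeries.single (-(n * e : ℕ) : ℤ) 1 *
      HahnSeries.ofPowerSeries ℤ k (qjSubst 1 e ^ n) := by
    simp [jSubst, mul_pow, HahnSeries.single_pow]
  rw [hpow, coeff_single_mul_ofPowerSeries, map_pow, constantCoeff_qjSubst, one_pow, one_mul]

theorem jSubst_inj (hz : z ≠ 0) (hw : w ≠ 0) : jSubst z d = jSubst w e ↔ d = e ∧ z = w := by
  refine ⟨fun h ↦ ?_, fun ⟨hde, hzw⟩ ↦ by rw [hde, hzw]⟩
  have le_of_eq {x y : k} {a b : ℕ} (hy : y ≠ 0) (hxy : jSubst x a = jSubst y b) : b ≤ a := by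
    by_contra! hab
    exact inv_ne_zero hy (by rw [← coeff_jSubst y b, ← hxy, coeff_jSubst_of_lt (by omega)])
  obtain rfl : d = e := le_antisymm (le_of_eq hz h.symm) (le_of_eq hw h)
  exact ⟨rfl, inv_injective (by rw [← coeff_jSubst, h, coeff_jSubst])⟩

lemma mapCoeff_jSubst {k' : Type*} [Field k'] (σ : k →+* k') (z : k) (e : ℕ) :
    mapCoeff σ (jSubst z e) = jSubst (σ z) e := by
  have hqj : (qjSubst z e).map σ = qjSubst (σ z) e := by
    ext n
    simp only [PowerSeries.coeff_map, qjSubst, PowerSeries.coeff_mk]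
    split_ifs <;> simp
  rw [jSubst, map_mul, mapCoeff_ofPowerSeries, mapCoeff_single, map_inv₀, hqj, jSubst]

variable [Algebra k ℂ] {h : ℝ}

lemma hasQExpansion_qjSubst (he : e ≠ 0) {φ : ℍ → ℍ}
    (hφ : ∀ τ : ℍ, qParam 1 (φ τ) = algebraMap k ℂ z * qParam h τ ^ e) :
    HasQExpansion h (fun τ ↦ qParam 1 (φ τ) * jFunction (φ τ)) (qjSubst z e) := fun τ ↦ by
  have hinj : Function.Injective (e * ·) := mul_right_injective₀ he
  rw [← hinj.hasSum_iff]
  · convert! hasQExpansion_qParam_mul_jFunction (φ τ) using 2 with n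
    simp only [Function.comp_apply, qjSubst, PowerSeries.coeff_mk, dvd_mul_right, if_true,
      Nat.mul_div_cancel_left _ (Nat.pos_of_ne_zero he), map_mul, map_ratCast, map_pow, hφ,
      eq_ratCast]
    ring
  · intro n hn
    have hdvd : ¬ e ∣ n := fun ⟨m, hm⟩ ↦ hn ⟨m, hm.symm⟩
    simp [qjSubst, hdvd]

theorem hasLaurentExpansionLE_jSubst (hz : z ≠ 0) (he : e ≠ 0) {φ : ℍ → ℍ}
    (hd : MDiff fun τ ↦ jFunction (φ τ))
    (hφ : ∀ τ : ℍ, qParam 1 (φ τ) = algebraMap k ℂ z * qParam h τ ^ e) :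
    HasLaurentExpansionLE h e (fun τ ↦ jFunction (φ τ)) (jSubst z e) := by
  refine ⟨hd, PowerSeries.C z⁻¹ * qjSubst z e, ?_, ?_⟩
  · rw [jSubst, map_mul, HahnSeries.ofPowerSeries_C, HahnSeries.C_apply, ← mul_assoc,
      HahnSeries.single_mul_single, add_zero, one_mul]
  · convert! (HasQExpansion.const h z⁻¹).mul (hasQExpansion_qjSubst he hφ) using 1
    ext τ
    have hz' : algebraMap k ℂ z ≠ 0 := by simpa using hz
    simp only [Pi.mul_apply, hφ, map_inv₀]
    field_simp

lemma hasLaurentExpansionLE_jFunction {N : ℕ} (hN : N ≠ 0) :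
    HasLaurentExpansionLE N N jFunction (jSubst (1 : k) N) :=
  hasLaurentExpansionLE_jSubst one_ne_zero hN (φ := id) mdifferentiable_jFunction
    fun τ ↦ by simp [qParam_natCast_pow hN]

end JExpansion

/-! ### Functions of level one -/

section LevelOne

variable {F k : Type*} [Field F] [Field k] [Algebra F k] {N : ℕ}

/-- Evaluation of polynomials over `F` at the expansion of `j` in `q ^ (1 / N)`. -/
def evalJ (F k : Type*) [Field F] [Field k] [Algebra F k] (N : ℕ) :
    Polynomial F →ₐ[F] LaurentSeries k :=
  Polynomial.aeval (jSubst 1 N)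

lemma evalJ_C (a : F) : evalJ F k N (Polynomial.C a) = HahnSeries.C (algebraMap F k a) := by
  rw [evalJ, Polynomial.aeval_C, HahnSeries.algebraMap_apply', PowerSeries.algebraMap_apply,
    HahnSeries.ofPowerSeries_C]

lemma evalJ_X : evalJ F k N Polynomial.X = jSubst 1 N := Polynomial.aeval_X _

lemma mapCoeff_evalJ (σ : k ≃ₐ[F] k) (P : Polynomial F) :
    mapCoeff (σ : k →+* k) (evalJ F k N P) = evalJ F k N P := by
  suffices h : (mapCoeff (σ : k →+* k)).comp (evalJ F k N : Polynomial F →+* LaurentSeries k) =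
      evalJ F k N from RingHom.congr_fun h P
  refine Polynomial.ringHom_ext (fun a ↦ ?_) ?_
  · simp only [RingHom.comp_apply, RingHom.coe_coe, evalJ_C, mapCoeff_C, AlgEquiv.commutes]
  · simp [evalJ_X, mapCoeff_jSubst]

variable [Algebra k ℂ]

section

variable [Algebra F ℂ] [IsScalarTower F k ℂ]

lemma hasLaurentExpansion_evalJ (hN : N ≠ 0) (P : Polynomial F) :
    HasLaurentExpansion N (fun τ ↦ Polynomial.aeval (jFunction τ) P) (evalJ F k N P) := by
  induction P using Polynomial.induction_on' with
  | add P Q hP hQ =>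
    rw [map_add]
    convert! hP.add hQ using 1
    ext τ
    simp
  | monomial n a =>
    convert! (HasLaurentExpansion.const N (algebraMap F k a)).mul
      ⟨_, (hasLaurentExpansionLE_jFunction hN).pow n⟩ using 1
    · ext τ
      simp [← IsScalarTower.algebraMap_apply, Polynomial.aeval_monomial]
    · rw [← Polynomial.C_mul_X_pow_eq_monomial, map_mul, map_pow, evalJ_C, evalJ_X]

end

lemma evalJ_injective (hN : N ≠ 0) : Function.Injective (evalJ F k N) := by
  let _ : Algebra F ℂ := ((algebraMap k ℂ).comp (algebraMap F k)).toAlgebra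
  have : IsScalarTower F k ℂ := .of_algebraMap_eq' rfl
  rw [injective_iff_map_eq_zero]
  intro P hP
  have hzero := ((hasLaurentExpansion_evalJ (k := k) hN P).eq_zero_iff (by positivity)).2 hP
  refine (Polynomial.map_eq_zero (algebraMap F ℂ)).1 (Polynomial.zero_of_eval_zero _ fun z ↦ ?_)
  obtain ⟨τ, rfl⟩ := jFunction_surjective z
  rw [Polynomial.eval_map_algebraMap]
  exact congr_fun hzero τ

lemma tendsto_vadd_atImInfty (x : ℝ) : Tendsto (fun τ : ℍ ↦ x +ᵥ τ) atImInfty atImInfty :=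
  tendsto_comap_iff.2 (by simpa [Function.comp_def] using! tendsto_comap)

namespace HasLaurentExpansionLE

variable {h : ℝ} {m : ℕ} {f : ℍ → ℂ} {s : LaurentSeries k}

lemma tendsto (hh : 0 < h) (hf : HasLaurentExpansionLE h m f s) :
    Tendsto (fun τ : ℍ ↦ qParam h τ ^ m * f τ) atImInfty (𝓝 (algebraMap k ℂ (s.coeff (-m)))) := by
  obtain ⟨-, p, rfl, hp⟩ := hf
  rw [coeff_single_mul_ofPowerSeries, one_mul]
  exact hp.tendsto_atImInfty hh

lemma dvd_of_coeff_ne_zero (hN : N ≠ 0) (hf : HasLaurentExpansionLE N m f s)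
    (hper : ∀ τ : ℍ, f ((1 : ℝ) +ᵥ τ) = f τ) (hs : s.coeff (-m) ≠ 0) : N ∣ m := by
  have hlim := hf.tendsto (by positivity)
  rw [← (Complex.isPrimitiveRoot_exp N hN).pow_eq_one_iff_dvd]
  have hlim_vadd := hlim.comp (tendsto_vadd_atImInfty 1)
  simp only [Function.comp_def, hper, qParam_natCast_one_vadd hN, mul_pow,
    mul_assoc (Complex.exp _ ^ m)] at hlim_vadd
  exact (mul_eq_right₀ ((map_ne_zero _).2 hs)).1
    (tendsto_nhds_unique (hlim.const_mul _) hlim_vadd)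

lemma eq_C_of_forall_smul_eq (hh : 0 < h) (hf : HasLaurentExpansionLE h 0 f s)
    (hinv : ∀ (γ : SL(2, ℤ)) (τ : ℍ), f (γ • τ) = f τ) : s = HahnSeries.C (s.coeff 0) := by
  have hlim : Tendsto f atImInfty (𝓝 (algebraMap k ℂ (s.coeff 0))) := by
    simpa using! hf.tendsto hh
  obtain ⟨c, hc⟩ := exists_eq_const_of_forall_smul_eq hf.1 hinv (hlim.isBigO_one ℝ)
  obtain rfl : f = fun _ ↦ c := funext hc
  have hc0 : algebraMap k ℂ (s.coeff 0) = c := tendsto_nhds_unique hlim tendsto_const_nhds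
  exact HasLaurentExpansion.unique_right hh ⟨0, hf⟩ (hc0 ▸ .const h (s.coeff 0))

end HasLaurentExpansionLE

theorem exists_evalJ_eq [IsGalois F k] (hN : N ≠ 0) {f : ℍ → ℂ} {s : LaurentSeries k}
    (hf : HasLaurentExpansion N f s) (hinv : ∀ (γ : SL(2, ℤ)) (τ : ℍ), f (γ • τ) = f τ)
    (hs : ∀ σ : k ≃ₐ[F] k, mapCoeff (σ : k →+* k) s = s) :
    ∃ P : Polynomial F, evalJ F k N P = s := by
  have exists_algebraMap_eq_coeff {s : LaurentSeries k}
      (hs : ∀ σ : k ≃ₐ[F] k, mapCoeff (σ : k →+* k) s = s) (n : ℤ) :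
      ∃ b, algebraMap F k b = s.coeff n :=
    (InfiniteGalois.mem_range_algebraMap_iff_fixed _).2 fun σ ↦
      congr_arg (HahnSeries.coeff · n) (hs σ)
  obtain ⟨m, hf⟩ := hf
  induction m generalizing f s with
  | zero =>
    obtain ⟨b, hb⟩ := exists_algebraMap_eq_coeff hs 0
    refine ⟨.C b, ?_⟩
    rw [evalJ_C, hb, ← hf.eq_C_of_forall_smul_eq (by positivity) hinv]
  | succ m ih =>
    by_cases h0 : s.coeff (-(m + 1 : ℕ)) = 0
    · exact ih hinv hs (hf.of_coeff_eq_zero h0)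
    obtain ⟨l, hl⟩ : N ∣ m + 1 :=
      hf.dvd_of_coeff_ne_zero hN (fun τ ↦ by rw [← modular_T_smul, hinv]) h0
    obtain ⟨b, hb⟩ := exists_algebraMap_eq_coeff hs (-(m + 1 : ℕ))
    have hjl : HasLaurentExpansionLE N (m + 1) (jFunction ^ l) (jSubst (1 : k) N ^ l) := by
      simpa only [hl, mul_comm N] using (hasLaurentExpansionLE_jFunction hN).pow l
    have hbjl := (HasLaurentExpansionLE.const N (algebraMap F k b)).mul hjl
    rw [zero_add] at hbjl
    have hcoeff :
        (s - HahnSeries.C (algebraMap F k b) * jSubst 1 N ^ l).coeff (-(m + 1 : ℕ)) = 0 := by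
      rw [HahnSeries.coeff_sub, HahnSeries.C_apply, HahnSeries.coeff_single_zero_mul, hb, hl,
        mul_comm N, coeff_jSubst_one_pow, mul_one, sub_self]
    obtain ⟨P, hP⟩ := ih (f := f - (fun _ ↦ algebraMap k ℂ (algebraMap F k b)) * jFunction ^ l)
      (fun γ τ ↦ by simp only [Pi.sub_apply, Pi.mul_apply, Pi.pow_apply, hinv, jFunction_smul])
      (fun σ ↦ by rw [map_sub, hs, map_mul, map_pow, mapCoeff_C, mapCoeff_jSubst, map_one,
        RingHom.coe_coe, AlgEquiv.commutes])
      ((hf.sub hbjl).of_coeff_eq_zero hcoeff)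
    refine ⟨P + .C b * .X ^ l, ?_⟩
    rw [map_add, hP, map_mul, map_pow, evalJ_C, evalJ_X, sub_add_cancel]

end LevelOne

/-! ### Integral matrices of determinant `N` and rows modulo `N` -/

section Lifting

lemma exists_forall_prime_dvd_iff {n : ℕ} (hn : n ≠ 0) (S : ℕ → Prop) :
    ∃ y : ℕ, ∀ p, p.Prime → p ∣ n → (p ∣ y ↔ S p) := by
  refine ⟨∏ p ∈ n.primeFactors with S p, p, fun p hp hpn ↦ ?_⟩
  rw [hp.prime.dvd_finsetProd_iff]
  constructor
  · rintro ⟨r, hr, hpr⟩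
    rw [Finset.mem_filter, Nat.mem_primeFactors] at hr
    exact (Nat.prime_dvd_prime_iff_eq hp hr.1.1).1 hpr ▸ hr.2
  · exact fun hS ↦ ⟨p, Finset.mem_filter.2 ⟨Nat.mem_primeFactors.2 ⟨hp, hpn, hn⟩, hS⟩, dvd_rfl⟩

variable {N : ℕ}

lemma isCoprime_intCast_zmod {x y : ℤ}
    (h : ∀ p : ℕ, p.Prime → p ∣ N → (p : ℤ) ∣ x → ¬ (p : ℤ) ∣ y) :
    IsCoprime (x : ZMod N) (y : ZMod N) := by
  have hcop : Nat.Coprime N (Int.gcd x y) := Nat.coprime_of_dvd fun p hp hpN hpg ↦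
    h p hp hpN ((Int.natCast_dvd_natCast.2 hpg).trans (Int.gcd_dvd_left x y))
      ((Int.natCast_dvd_natCast.2 hpg).trans (Int.gcd_dvd_right x y))
  obtain ⟨s, t, hst⟩ := Nat.isCoprime_iff_coprime.2 hcop
  rw [Int.gcd_eq_gcd_ab] at hst
  have hmod := congr_arg (Int.cast : ℤ → ZMod N) hst
  push_cast at hmod
  rw [ZMod.natCast_self] at hmod
  exact ⟨t * Int.gcdA x y, t * Int.gcdB x y, by linear_combination hmod⟩

lemma exists_coprime_lift_of_row [NeZero N] (M : SL(2, ZMod N)) :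
    ∃ c d : ℤ, IsCoprime c d ∧ (c : ZMod N) = M 1 0 ∧ (d : ZMod N) = M 1 1 := by
  set c := (M 1 0).val + N
  set b := (M 1 1).val
  have hc : c ≠ 0 := by simp [c, NeZero.ne]
  obtain ⟨y, hy⟩ := exists_forall_prime_dvd_iff hc (¬ · ∣ b)
  refine ⟨c, (b + y * N : ℕ), Nat.isCoprime_iff_coprime.2 (Nat.coprime_of_dvd ?_),
    by simp [c], by simp [b]⟩
  intro p hp hpc hpd
  by_cases hpb : p ∣ b
  · obtain hpy | hpN := hp.dvd_mul.1 ((Nat.dvd_add_right hpb).1 hpd)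
    · exact (hy p hp hpc).1 hpy hpb
    · have : Fact p.Prime := ⟨hp⟩
      set f := ZMod.castHom hpN (ZMod p)
      have map_eq_zero {x : ZMod N} (hx : p ∣ x.val) : f x = 0 := by
        rw [← ZMod.natCast_zmod_val x, map_natCast, ZMod.natCast_eq_zero_iff]
        exact hx
      have hdet := congr_arg f M.2
      rw [det_fin_two, map_sub, map_mul, map_mul, map_eq_zero hpb,
        map_eq_zero ((Nat.dvd_add_left hpN).1 hpc), mul_zero, mul_zero, sub_zero, map_one] at hdet
      exact zero_ne_one hdet
  · exact hpb ((Nat.dvd_add_left (((hy p hp hpc).2 hpb).mul_right N)).1 hpd)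

lemma map_intCast_T_pow_eq [NeZero N] {U : SL(2, ZMod N)} (h0 : U 1 0 = 0) (h1 : U 1 1 = 1) :
    SpecialLinearGroup.map (Int.castRingHom (ZMod N)) (ModularGroup.T ^ (U 0 1).val) = U := by
  have hdet := U.2
  rw [det_fin_two, h0, h1, mul_one, mul_zero, sub_zero] at hdet
  ext i j
  rw [SpecialLinearGroup.map_apply_coe, RingHom.mapMatrix_apply, map_apply, ← zpow_natCast,
    ModularGroup.coe_T_zpow]
  fin_cases i <;> fin_cases j <;> simp [h0, h1, hdet]

theorem specialLinearGroup_map_intCast_surjective [NeZero N] :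
    Function.Surjective (SpecialLinearGroup.map (n := Fin 2) (Int.castRingHom (ZMod N))) := by
  intro M
  obtain ⟨c, d, hcd, hc, hd⟩ := exists_coprime_lift_of_row M
  obtain ⟨δ, hδ0, hδ1⟩ := hcd.exists_SL2_row 1
  obtain ⟨R, hR⟩ : ∃ R, SpecialLinearGroup.map (Int.castRingHom (ZMod N)) δ = R := ⟨_, rfl⟩
  have hrow (j : Fin 2) : M 1 j = R 1 j := by
    fin_cases j <;> simp [← hR, hδ0, hδ1, hc, hd]
  have hU (j : Fin 2) : (M * R⁻¹) 1 j = (1 : SL(2, ZMod N)) 1 j := by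
    rw [← mul_inv_cancel R]
    change ∑ l, M 1 l * R⁻¹.1 l j = ∑ l, R 1 l * R⁻¹.1 l j
    simp only [hrow]
  refine ⟨ModularGroup.T ^ ((M * R⁻¹) 0 1).val * δ, ?_⟩
  rw [map_mul, map_intCast_T_pow_eq (hU 0) (hU 1), hR, inv_mul_cancel_right]

end Lifting

lemma isPrimitiveIntMatrix_iff {A : Matrix (Fin 2) (Fin 2) ℤ} :
    IsPrimitiveIntMatrix A ↔ ∀ n : ℤ, (∀ i j, n ∣ A i j) → IsUnit n := by
  constructor
  · intro hA n hn
    refine isUnit_of_dvd_one ?_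
    rw [← Nat.cast_one, ← hA]
    exact Int.dvd_coe_gcd (Int.dvd_coe_gcd (hn 0 0) (hn 0 1)) (Int.dvd_coe_gcd (hn 1 0) (hn 1 1))
  · intro h
    refine Nat.isUnit_iff.1 (Int.ofNat_isUnit.1 (h _ fun i j ↦ ?_))
    fin_cases i
    · refine (Int.gcd_dvd_left _ _).trans ?_
      fin_cases j
      exacts [Int.gcd_dvd_left _ _, Int.gcd_dvd_right _ _]
    · refine (Int.gcd_dvd_right _ _).trans ?_
      fin_cases j
      exacts [Int.gcd_dvd_left _ _, Int.gcd_dvd_right _ _]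

section Adapted

variable {N : ℕ} {A B : Matrix (Fin 2) (Fin 2) ℤ} {v w : Fin 2 → ZMod N}

/-- The integral matrix `A` has determinant `N`, and the row `v` lies in the span modulo `N` of
the rows of `A`. Unimodular rows up to units correspond in this way to the cosets of `SL₂(ℤ)` in
the set of primitive matrices of determinant `N`. -/
def Adapted (A : Matrix (Fin 2) (Fin 2) ℤ) (v : Fin 2 → ZMod N) : Prop :=
  A.det = N ∧ ∃ c : Fin 2 → ZMod N, c ᵥ* A.map Int.cast = v

lemma det_map_intCast {R : Type*} [CommRing R] (A : Matrix (Fin 2) (Fin 2) ℤ) :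
    (A.map (Int.cast : ℤ → R)).det = A.det :=
  (Int.cast_det A).symm

namespace Adapted

lemma mul_coe (h : Adapted A v) (γ : SL(2, ℤ)) :
    Adapted (A * γ) (v ᵥ* (γ : Matrix (Fin 2) (Fin 2) ℤ).map Int.cast) := by
  obtain ⟨hd, c, rfl⟩ := h
  refine ⟨by rw [det_mul, γ.2, mul_one, hd], c, ?_⟩
  rw [vecMul_vecMul]
  exact congr_arg (c ᵥ* ·) (Matrix.map_mul (f := Int.castRingHom (ZMod N)))

lemma smul (h : Adapted A v) (u : ZMod N) : Adapted A (u • v) := by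
  obtain ⟨hd, c, rfl⟩ := h
  exact ⟨hd, u • c, Matrix.smul_vecMul u c _⟩

lemma exists_row_eq_mul (h : Adapted A v) (hv : IsCoprime (v 0) (v 1)) :
    ∃ u : Fin 2 → ZMod N, ∀ i j, (A i j : ZMod N) = u i * v j := by
  obtain ⟨hd, c, rfl⟩ := h
  have hdet := congr_arg (Int.cast : ℤ → ZMod N) hd
  rw [det_fin_two, Int.cast_natCast, ZMod.natCast_self] at hdet
  push_cast at hdet
  obtain ⟨s, t, hst⟩ := hv
  simp only [vecMul, dotProduct, Fin.sum_univ_two, map_apply] at hst ⊢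
  refine ⟨fun i ↦ s * A i 0 + t * A i 1, fun i j ↦ ?_⟩
  fin_cases i <;> fin_cases j <;> simp only [Fin.zero_eta, Fin.mk_one]
  · linear_combination (-(A 0 0 : ZMod N)) * hst + t * c 1 * hdet
  · linear_combination (-(A 0 1 : ZMod N)) * hst - s * c 1 * hdet
  · linear_combination (-(A 1 0 : ZMod N)) * hst - t * c 0 * hdet
  · linear_combination (-(A 1 1 : ZMod N)) * hst + s * c 0 * hdet

lemma exists_eq_mul [NeZero N] (hv : IsCoprime (v 0) (v 1)) (hA : Adapted A v)
    (hB : Adapted B v) : ∃ γ : SL(2, ℤ), A = γ * B := by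
  have hN : (N : ℤ) ≠ 0 := NeZero.ne _
  have hdvd (i j) : (N : ℤ) ∣ (A * B.adjugate) i j := by
    obtain ⟨u, hu⟩ := hA.exists_row_eq_mul hv
    obtain ⟨w, hw⟩ := hB.exists_row_eq_mul hv
    rw [← ZMod.intCast_zmod_eq_zero_iff_dvd, mul_apply, Fin.sum_univ_two, adjugate_fin_two]
    fin_cases j <;> simp [hu, hw] <;> ring
  choose C hC using hdvd
  have hAC : A * B.adjugate = (N : ℤ) • of C := by
    ext i j
    simp [hC]
  have hCB : of C * B = A := by
    refine smul_right_injective _ hN ?_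
    dsimp only
    rw [← Matrix.smul_mul, ← hAC, Matrix.mul_assoc, adjugate_mul, hB.1, mul_smul_one]
  refine ⟨⟨of C, mul_right_cancel₀ hN ?_⟩, hCB.symm⟩
  rw [← hB.1, ← det_mul, hCB, hA.1, hB.1, one_mul]

lemma exists_eq_unit_smul (hv : IsCoprime (v 0) (v 1)) (hw : IsCoprime (w 0) (w 1))
    (hAv : Adapted A v) (hAw : Adapted A w) : ∃ u : (ZMod N)ˣ, w = (u : ZMod N) • v := by
  obtain ⟨u, hu⟩ := hAv.exists_row_eq_mul hv
  obtain ⟨-, c, rfl⟩ := hAw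
  have hcu : c ᵥ* A.map Int.cast = (c ⬝ᵥ u) • v := by
    ext j
    simp only [vecMul, dotProduct, map_apply, hu, Pi.smul_apply, smul_eq_mul, Finset.sum_mul,
      mul_assoc]
  rw [hcu] at hw ⊢
  obtain ⟨s, t, hst⟩ := hw
  have hunit : IsUnit (c ⬝ᵥ u) := .of_mul_eq_one (s * v 0 + t * v 1) (by
    rw [← hst, Pi.smul_apply, Pi.smul_apply, smul_eq_mul, smul_eq_mul]
    ring)
  exact ⟨hunit.unit, rfl⟩

lemma isPrimitiveIntMatrix (hv : IsCoprime (v 0) (v 1)) (h : Adapted A v) :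
    IsPrimitiveIntMatrix A := by
  obtain ⟨hd, c, rfl⟩ := h
  obtain ⟨s, t, hst⟩ := hv
  rw [isPrimitiveIntMatrix_iff]
  intro n hn
  choose B hB using hn
  have hnN : n ∣ N := by
    rw [← hd, det_fin_two, hB 0 0, hB 1 0, mul_assoc, mul_left_comm (A 0 1)]
    exact dvd_sub (dvd_mul_right _ _) (dvd_mul_right _ _)
  have hunit : IsUnit (n : ZMod N) := by
    simp only [vecMul, dotProduct, Fin.sum_univ_two, map_apply, hB, Int.cast_mul] at hst
    exact .of_mul_eq_one (s * (c 0 * B 0 0 + c 1 * B 1 0) + t * (c 0 * B 0 1 + c 1 * B 1 1))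
      (by linear_combination hst)
  exact ((ZMod.coe_int_isUnit_iff_isCoprime _ _).1 hunit).isUnit_of_dvd' hnN dvd_rfl

end Adapted

lemma IsPrimitiveIntMatrix.exists_adapted [NeZero N] (hA : IsPrimitiveIntMatrix A)
    (hd : A.det = N) : ∃ v : Fin 2 → ZMod N, IsCoprime (v 0) (v 1) ∧ Adapted A v := by
  obtain ⟨y, hy⟩ := exists_forall_prime_dvd_iff (NeZero.ne N) fun p ↦ ∃ i, ¬ (p : ℤ) ∣ A 0 i
  refine ⟨![1, (y : ZMod N)] ᵥ* A.map Int.cast, ?_, hd, _, rfl⟩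
  have hcop := isCoprime_intCast_zmod (N := N) (x := A 0 0 + y * A 1 0) (y := A 0 1 + y * A 1 1)
    fun p hp hpN h0 h1 ↦ ?_
  · simpa [vecMul, dotProduct, Fin.sum_univ_two] using hcop
  have hrow (i : Fin 2) : (p : ℤ) ∣ A 0 i + y * A 1 i := by fin_cases i <;> assumption
  have hrow0 (i : Fin 2) : (p : ℤ) ∣ A 0 i := by
    by_contra hi
    have hpy : (p : ℤ) ∣ y := Int.natCast_dvd_natCast.2 ((hy p hp hpN).2 ⟨i, hi⟩)
    exact hi ((dvd_add_left (hpy.mul_right _)).1 (hrow i))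
  have hpy : ¬ (p : ℤ) ∣ y := fun h ↦
    ((hy p hp hpN).1 (Int.natCast_dvd_natCast.1 h)).elim fun i hi ↦ hi (hrow0 i)
  have hrow1 (i : Fin 2) : (p : ℤ) ∣ A 1 i :=
    ((Nat.prime_iff_prime_int.1 hp).dvd_or_dvd ((dvd_add_right (hrow0 i)).1 (hrow i))).resolve_left
      hpy
  refine (Nat.prime_iff_prime_int.1 hp).not_isUnit (isPrimitiveIntMatrix_iff.1 hA _ fun i ↦ ?_)
  fin_cases i
  exacts [hrow0, hrow1]

/-- An upper triangular matrix in Hermite normal form adapted to the row `v`. -/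
structure TriangularAdapted (v : Fin 2 → ZMod N) where
  /-- the upper left entry -/
  a : ℕ
  /-- the upper right entry -/
  b : ℕ
  /-- the lower right entry -/
  d : ℕ
  b_lt : b < d
  mul_eq : a * d = N
  adapted : Adapted !![(a : ℤ), b; 0, d] v

lemma nonempty_triangularAdapted [NeZero N] (v : Fin 2 → ZMod N) :
    Nonempty (TriangularAdapted v) := by
  set a := Nat.gcd (v 0).val N with ha
  obtain ⟨d, hd⟩ : a ∣ N := Nat.gcd_dvd_right _ N
  obtain ⟨x, hx⟩ : a ∣ (v 0).val := Nat.gcd_dvd_left _ N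
  have hxd : Nat.Coprime x d := by
    refine Nat.eq_of_mul_eq_mul_left (Nat.gcd_pos_of_pos_right (v 0).val (NeZero.pos N)) ?_
    rw [← ha, ← Nat.gcd_mul_left, ← hx, ← hd, ← ha, mul_one]
  have : NeZero d := ⟨right_ne_zero_of_mul (hd ▸ NeZero.ne N)⟩
  set b := ((v 1).val * (x : ZMod d)⁻¹ : ZMod d).val with hb
  obtain ⟨y, hy⟩ : (d : ℤ) ∣ (v 1).val - x * b := by
    rw [← ZMod.intCast_zmod_eq_zero_iff_dvd]
    push_cast
    rw [hb, ZMod.natCast_zmod_val]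
    linear_combination (-((v 1).val : ZMod d)) * ZMod.coe_mul_inv_eq_one x hxd
  refine ⟨⟨a, b, d, ZMod.val_lt _, hd.symm, ?_, ![x, y], ?_⟩⟩
  · rw [det_fin_two_of, mul_zero, sub_zero]
    exact_mod_cast hd.symm
  · have h0 : v 0 = (x * a : ℕ) := by rw [mul_comm, ← hx, ZMod.natCast_zmod_val]
    have h1 : v 1 = ((x * b + y * d : ℤ) : ZMod N) := by
      rw [mul_comm y, ← hy, add_sub_cancel, Int.cast_natCast, ZMod.natCast_zmod_val]
    ext i
    fin_cases i
    · simp [vecMul, dotProduct, Fin.sum_univ_two, h0]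
    · simp [vecMul, dotProduct, Fin.sum_univ_two, h1]

lemma Adapted.twist {a b d : ℕ} (h : Adapted !![(a : ℤ), b; 0, d] v) (n : ℕ) :
    Adapted !![(a : ℤ), (n * b : ℕ); 0, d] ![v 0, v 1 * n] := by
  obtain ⟨hd, c, rfl⟩ := h
  refine ⟨by simpa [det_fin_two_of] using hd, ![c 0, c 1 * n], ?_⟩
  ext i
  fin_cases i
  · simp [vecMul, dotProduct, Fin.sum_univ_two]
  · simp only [vecMul, dotProduct, Fin.sum_univ_two, map_apply]
    simp
    ring

end Adapted

/-! ### The conjugates of `j` indexed by unimodular rows -/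

section IntGL

variable {A B : Matrix (Fin 2) (Fin 2) ℤ}

/-- An integral matrix of positive determinant, viewed in `GL₂(ℝ)`, which acts on `ℍ`. -/
def intGL (A : Matrix (Fin 2) (Fin 2) ℤ) (hA : 0 < A.det) : GL (Fin 2) ℝ :=
  GeneralLinearGroup.mkOfDetNeZero (A.map Int.cast) (by
    rw [det_map_intCast]
    exact_mod_cast hA.ne')

lemma coe_intGL (hA : 0 < A.det) : (intGL A hA).val = A.map Int.cast := rfl

lemma det_intGL_pos (hA : 0 < A.det) : 0 < (intGL A hA).det.val := by
  rw [GeneralLinearGroup.val_det_apply, coe_intGL, det_map_intCast]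
  exact_mod_cast hA

lemma det_coe_pos (γ : SL(2, ℤ)) : 0 < (γ : Matrix (Fin 2) (Fin 2) ℤ).det := by
  rw [γ.2]
  exact one_pos

lemma det_mul_coe_pos (hA : 0 < A.det) (γ : SL(2, ℤ)) : 0 < (A * γ).det := by
  rwa [det_mul, γ.2, mul_one]

lemma det_coe_mul_pos (hA : 0 < A.det) (γ : SL(2, ℤ)) :
    0 < ((γ : Matrix (Fin 2) (Fin 2) ℤ) * A).det := by
  rwa [det_mul, γ.2, one_mul]

lemma intGL_mul_smul (hA : 0 < A.det) (hB : 0 < B.det) (hAB : 0 < (A * B).det) (τ : ℍ) :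
    intGL (A * B) hAB • τ = intGL A hA • intGL B hB • τ := by
  rw [← mul_smul]
  congr 1
  exact Units.ext (Matrix.map_mul (f := Int.castRingHom ℝ))

lemma intGL_coe_smul (γ : SL(2, ℤ)) (τ : ℍ) :
    intGL γ (det_coe_pos γ) • τ = γ • τ := by
  have h : intGL γ (det_coe_pos γ) =
      SpecialLinearGroup.toGL (SpecialLinearGroup.map (algebraMap ℤ ℝ) γ) :=
    Units.ext rfl
  rw [h]
  rfl

lemma jFunction_intGL_coe_mul_smul (γ : SL(2, ℤ)) (hA : 0 < A.det) (τ : ℍ) :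
    jFunction (intGL (γ * A) (det_coe_mul_pos hA γ) • τ) = jFunction (intGL A hA • τ) := by
  rw [intGL_mul_smul (det_coe_pos γ) hA, intGL_coe_smul, jFunction_smul]

lemma intGL_mul_coe_smul (hA : 0 < A.det) (γ : SL(2, ℤ)) (τ : ℍ) :
    intGL (A * γ) (det_mul_coe_pos hA γ) • τ = intGL A hA • γ • τ := by
  rw [intGL_mul_smul hA (det_coe_pos γ), intGL_coe_smul]

lemma coe_intGL_triangular_smul {a b d : ℤ} (h : 0 < !![a, b; 0, d].det) (τ : ℍ) :
    ((intGL !![a, b; 0, d] h • τ : ℍ) : ℂ) = (a * τ + b) / d := by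
  rw [coe_smul_of_det_pos (det_intGL_pos h), num, denom, coe_intGL]
  simp

end IntGL

/-- Unimodular rows of length two over `ℤ/N`. Up to units they index the functions `j ∘ g`,
`g ∈ G_N`. -/
def UnimodularRow (N : ℕ) : Type := {v : Fin 2 → ZMod N // IsCoprime (v 0) (v 1)}

section UnimodularRow

variable {N : ℕ}

instance [NeZero N] : Finite (UnimodularRow N) := Subtype.finite

lemma isCoprime_vecMul {R : Type*} [CommRing R] {v : Fin 2 → R} (hv : IsCoprime (v 0) (v 1))
    (g : GL (Fin 2) R) : IsCoprime ((v ᵥ* g.val) 0) ((v ᵥ* g.val) 1) := by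
  obtain ⟨s, t, hst⟩ := hv
  obtain ⟨w, hw⟩ : ∃ w, w = g⁻¹.val *ᵥ ![s, t] := ⟨_, rfl⟩
  have h : (v ᵥ* g.val) ⬝ᵥ w = 1 := by
    rw [hw, ← dotProduct_mulVec, mulVec_mulVec, ← Units.val_mul, mul_inv_cancel]
    simpa [dotProduct, mul_comm] using hst
  rw [dotProduct, Fin.sum_univ_two] at h
  exact ⟨w 0, w 1, by linear_combination h⟩

instance : MulAction (GL (Fin 2) (ZMod N)) (UnimodularRow N) where
  smul g v := ⟨v.1 ᵥ* g⁻¹.val, isCoprime_vecMul v.2 g⁻¹⟩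
  one_smul v := Subtype.ext (by
    change v.1 ᵥ* ((1 : GL (Fin 2) (ZMod N))⁻¹).val = v.1
    rw [inv_one, Units.val_one, vecMul_one])
  mul_smul g h v := Subtype.ext (by
    change v.1 ᵥ* ((g * h)⁻¹).val = (v.1 ᵥ* (h⁻¹).val) ᵥ* (g⁻¹).val
    rw [_root_.mul_inv_rev, Units.val_mul, vecMul_vecMul])

lemma UnimodularRow.coe_smul (g : GL (Fin 2) (ZMod N)) (v : UnimodularRow N) :
    (g • v).1 = v.1 ᵥ* g⁻¹.val := rfl

/-- The diagonal matrix with entries `1`, `u`. -/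
def diagGL {R : Type*} [CommRing R] (u : Rˣ) : GL (Fin 2) R :=
  GeneralLinearGroup.mk'' !![1, 0; 0, u.val] (by simp [det_fin_two_of])

lemma coe_diagGL {R : Type*} [CommRing R] (u : Rˣ) : (diagGL u).val = !![1, 0; 0, u.val] := rfl

/-- Reduction modulo `N`. -/
def redGL : SL(2, ℤ) →* GL (Fin 2) (ZMod N) :=
  SpecialLinearGroup.toGL.comp (SpecialLinearGroup.map (Int.castRingHom (ZMod N)))

end UnimodularRow

section RowSeries

variable {N : ℕ} [NeZero N]

lemma Adapted.det_pos {A : Matrix (Fin 2) (Fin 2) ℤ} {v : Fin 2 → ZMod N} (h : Adapted A v) :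
    0 < A.det := by
  rw [h.1]
  exact_mod_cast NeZero.pos N

/-- A chosen matrix in Hermite normal form adapted to `v`. -/
def rowTriangular (v : UnimodularRow N) : TriangularAdapted v.1 :=
  (nonempty_triangularAdapted v.1).some

/-- The function `j ∘ g` attached to the row `v`, where `g` is any integral matrix of determinant
`N` adapted to `v`. -/
def jRow (v : UnimodularRow N) (τ : ℍ) : ℂ :=
  jFunction (intGL _ (rowTriangular v).adapted.det_pos • τ)

lemma Adapted.jFunction_eq_jRow {A : Matrix (Fin 2) (Fin 2) ℤ} {v : UnimodularRow N}
    (h : Adapted A v.1) (τ : ℍ) : jFunction (intGL A h.det_pos • τ) = jRow v τ := by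
  obtain ⟨γ, rfl⟩ := h.exists_eq_mul v.2 (rowTriangular v).adapted
  exact jFunction_intGL_coe_mul_smul γ _ τ

lemma jRow_smul (γ : SL(2, ℤ)) (v : UnimodularRow N) (τ : ℍ) :
    jRow v (γ • τ) = jRow ((redGL γ : GL (Fin 2) (ZMod N))⁻¹ • v) τ := by
  rw [jRow, ← intGL_mul_coe_smul]
  refine Adapted.jFunction_eq_jRow ?_ τ
  rw [UnimodularRow.coe_smul, inv_inv]
  exact (rowTriangular v).adapted.mul_coe γ

variable {k : Type*} [Field k]

/-- The Laurent expansion of `jRow v` in `exp (2πiτ/N)`, where `ζ` stands for `exp (2πi/N)`. -/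
def rowSeries (ζ : k) (v : UnimodularRow N) : LaurentSeries k :=
  jSubst (ζ ^ ((rowTriangular v).a * (rowTriangular v).b)) ((rowTriangular v).a ^ 2)

variable {ζ : k}

lemma exists_eq_unit_smul_of_rowSeries_eq (hprim : IsPrimitiveRoot ζ N) {v w : UnimodularRow N}
    (h : rowSeries ζ v = rowSeries ζ w) : ∃ u : (ZMod N)ˣ, w.1 = (u : ZMod N) • v.1 := by
  unfold rowSeries at h
  generalize rowTriangular v = s, rowTriangular w = t at h
  obtain ⟨a, b, d, hb, had, hv⟩ := s
  obtain ⟨a', b', d', hb', had', hw⟩ := t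
  have hζ : ζ ≠ 0 := hprim.ne_zero (NeZero.ne N)
  obtain ⟨ha, hpow⟩ := (jSubst_inj (pow_ne_zero _ hζ) (pow_ne_zero _ hζ)).1 h
  have ha0 : 0 < a := Nat.pos_of_mul_pos_right (had ▸ NeZero.pos N)
  obtain rfl : a = a' := Nat.pow_left_injective two_ne_zero ha
  obtain rfl : d = d' := Nat.eq_of_mul_eq_mul_left ha0 (had.trans had'.symm)
  obtain rfl : b = b' := Nat.eq_of_mul_eq_mul_left ha0 <| hprim.pow_inj
    (had ▸ Nat.mul_lt_mul_of_pos_left hb ha0) (had ▸ Nat.mul_lt_mul_of_pos_left hb' ha0) hpow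
  exact hv.exists_eq_unit_smul v.2 w.2 hw

variable [Algebra k ℂ]

lemma hasLaurentExpansion_triangular
    (hζ : algebraMap k ℂ ζ = Complex.exp (2 * Real.pi * Complex.I / N)) {a b d : ℕ}
    (had : a * d = N) (hdet : 0 < !![(a : ℤ), b; 0, d].det) :
    HasLaurentExpansion N (fun τ ↦ jFunction (intGL !![(a : ℤ), b; 0, d] hdet • τ))
      (jSubst (ζ ^ (a * b)) (a ^ 2)) := by
  have ha : a ≠ 0 := left_ne_zero_of_mul (had ▸ NeZero.ne N)
  have hd : (d : ℂ) ≠ 0 := Nat.cast_ne_zero.2 (right_ne_zero_of_mul (had ▸ NeZero.ne N))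
  have hζ0 : ζ ≠ 0 := by
    rintro rfl
    exact Complex.exp_ne_zero _ ((map_zero _).symm.trans hζ).symm
  refine ⟨_, hasLaurentExpansionLE_jSubst (pow_ne_zero _ hζ0) (pow_ne_zero 2 ha)
    (mdifferentiable_jFunction.comp (mdifferentiable_smul (det_intGL_pos hdet))) fun τ ↦ ?_⟩
  rw [map_pow, hζ, qParam, qParam, ← Complex.exp_nat_mul, ← Complex.exp_nat_mul, ← Complex.exp_add,
    coe_intGL_triangular_smul, ← had]
  congr 1
  have ha' : (a : ℂ) ≠ 0 := Nat.cast_ne_zero.2 ha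
  push_cast
  field_simp
  ring

lemma hasLaurentExpansion_jRow
    (hζ : algebraMap k ℂ ζ = Complex.exp (2 * Real.pi * Complex.I / N)) (v : UnimodularRow N) :
    HasLaurentExpansion N (jRow v) (rowSeries ζ v) :=
  hasLaurentExpansion_triangular hζ (rowTriangular v).mul_eq _

lemma mapCoeff_rowSeries (hζ : algebraMap k ℂ ζ = Complex.exp (2 * Real.pi * Complex.I / N))
    {σ : k →+* k} {u : (ZMod N)ˣ} (hσ : σ ζ = ζ ^ (u : ZMod N).val) (v : UnimodularRow N) :
    mapCoeff σ (rowSeries ζ v) = rowSeries ζ ((diagGL u)⁻¹ • v) := by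
  have h := (rowTriangular v).adapted.twist (u : ZMod N).val
  have hw : ![v.1 0, v.1 1 * ((u : ZMod N).val : ZMod N)] = ((diagGL u)⁻¹ • v).1 := by
    rw [UnimodularRow.coe_smul, inv_inv, coe_diagGL]
    ext i
    fin_cases i <;> simp [vecMul, dotProduct, Fin.sum_univ_two]
  rw [hw] at h
  have hexp := hasLaurentExpansion_triangular hζ (rowTriangular v).mul_eq h.det_pos
  simp_rw [h.jFunction_eq_jRow] at hexp
  rw [(hasLaurentExpansion_jRow hζ _).unique_right (Nat.cast_pos.2 (NeZero.pos N)) hexp, rowSeries,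
    mapCoeff_jSubst, map_pow, hσ, ← pow_mul, mul_left_comm]

lemma isPrimitiveRoot_of_algebraMap_eq_exp
    (hζ : algebraMap k ℂ ζ = Complex.exp (2 * Real.pi * Complex.I / N)) : IsPrimitiveRoot ζ N :=
  IsPrimitiveRoot.of_map_of_injective (f := algebraMap k ℂ)
    (hζ ▸ Complex.isPrimitiveRoot_exp N (NeZero.ne N)) (algebraMap k ℂ).injective

lemma rowSeries_smul_unit (hζ : algebraMap k ℂ ζ = Complex.exp (2 * Real.pi * Complex.I / N))
    {v w : UnimodularRow N} {u : ZMod N} (hw : w.1 = u • v.1) :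
    rowSeries ζ v = rowSeries ζ w := by
  have h : Adapted _ w.1 := hw ▸ (rowTriangular v).adapted.smul u
  refine (hasLaurentExpansion_jRow hζ v).unique_right (Nat.cast_pos.2 (NeZero.pos N)) ?_
  rw [show jRow v = jRow w from funext h.jFunction_eq_jRow]
  exact hasLaurentExpansion_jRow hζ w

lemma rowSeries_eq_iff (hζ : algebraMap k ℂ ζ = Complex.exp (2 * Real.pi * Complex.I / N))
    {v w : UnimodularRow N} :
    rowSeries ζ v = rowSeries ζ w ↔ ∃ u : (ZMod N)ˣ, w.1 = (u : ZMod N) • v.1 :=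
  ⟨exists_eq_unit_smul_of_rowSeries_eq (isPrimitiveRoot_of_algebraMap_eq_exp hζ),
    fun ⟨_, hu⟩ ↦ rowSeries_smul_unit hζ hu⟩

end RowSeries

/-! ### A criterion computing a Galois group from relations between roots -/

section Galois

variable {K L V G : Type*} [Group G] [MulAction G V]

lemma exists_monoidHom_algEquiv [CommRing K] [CommRing L] [Algebra K L] {r : V → L}
    (hr : Function.Surjective (MvPolynomial.aeval (R := K) r))
    (hinv : ∀ (g : G) (P : MvPolynomial V K), MvPolynomial.aeval r P = 0 →
      MvPolynomial.aeval (fun v ↦ r (g • v)) P = 0) :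
    ∃ φ : G →* (L ≃ₐ[K] L), ∀ g v, φ g (r v) = r (g • v) := by
  have hext {α β : L →ₐ[K] L} (h : ∀ v, α (r v) = β (r v)) : α = β := by
    refine (AlgHom.cancel_right hr).1 (MvPolynomial.algHom_ext fun v ↦ ?_)
    rw [AlgHom.comp_apply, AlgHom.comp_apply, MvPolynomial.aeval_X, h]
  have hex (g : G) : ∃ α : L →ₐ[K] L, ∀ v, α (r v) = r (g • v) := by
    refine ⟨AlgHom.liftOfSurjective _ hr _ (hinv g), fun v ↦ ?_⟩
    simpa only [MvPolynomial.aeval_X] using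
      AlgHom.liftOfSurjective_apply _ hr _ (hinv g) (MvPolynomial.X v)
  choose α hα using hex
  let ψ : G →* (L →ₐ[K] L) :=
    { toFun := α
      map_one' := hext fun v ↦ by rw [hα, one_smul, AlgHom.one_apply]
      map_mul' := fun g h ↦ hext fun v ↦ by rw [AlgHom.mul_apply, hα, hα, hα, mul_smul] }
  exact ⟨(AlgEquiv.algHomUnitsEquiv K L).toMonoidHom.comp ψ.toHomUnits, hα⟩

variable [Field K] [Field L] [Algebra K L]

lemma nonempty_algEquiv_mulEquiv [FiniteDimensional K L] {r : V → L}
    (hr : Function.Surjective (MvPolynomial.aeval (R := K) r))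
    (hinv : ∀ (g : G) (P : MvPolynomial V K), MvPolynomial.aeval r P = 0 →
      MvPolynomial.aeval (fun v ↦ r (g • v)) P = 0)
    (hfix : ∀ P : MvPolynomial V K,
      (∀ g : G, MvPolynomial.aeval (fun v ↦ r (g • v)) P = MvPolynomial.aeval r P) →
      ∃ c : K, MvPolynomial.aeval r P = algebraMap K L c)
    (Z : Subgroup G) [Z.Normal] (hZ : ∀ g, g ∈ Z ↔ ∀ v, r (g • v) = r v) :
    Nonempty ((L ≃ₐ[K] L) ≃* G ⧸ Z) := by
  obtain ⟨φ, hφ⟩ := exists_monoidHom_algEquiv hr hinv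
  have hφP (g : G) (P : MvPolynomial V K) :
      φ g (MvPolynomial.aeval r P) = MvPolynomial.aeval (fun v ↦ r (g • v)) P := by
    rw [← AlgEquiv.coe_toAlgHom, ← AlgHom.comp_apply, MvPolynomial.comp_aeval]
    simp only [AlgEquiv.coe_toAlgHom, hφ]
  have hbot : IntermediateField.fixedField φ.range = ⊥ := by
    refine eq_bot_iff.2 fun x hx ↦ ?_
    obtain ⟨P, rfl⟩ := hr x
    obtain ⟨c, hc⟩ := hfix P fun g ↦ by
      rw [← hφP]
      exact (IntermediateField.mem_fixedField_iff _ _).1 hx (φ g) ⟨g, rfl⟩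
    exact IntermediateField.mem_bot.2 ⟨c, hc.symm⟩
  have hsurj : Function.Surjective φ := by
    rw [← MonoidHom.range_eq_top, ← IntermediateField.fixingSubgroup_fixedField φ.range, hbot,
      IntermediateField.fixingSubgroup_bot]
  have hker : φ.ker = Z := by
    ext g
    rw [MonoidHom.mem_ker, hZ]
    refine ⟨fun h v ↦ by rw [← hφ, h, AlgEquiv.one_apply], fun h ↦ AlgEquiv.ext fun x ↦ ?_⟩
    obtain ⟨P, rfl⟩ := hr x
    simp only [hφP, h, AlgEquiv.one_apply]
  exact ⟨(QuotientGroup.quotientKerEquivOfSurjective φ hsurj).symm.trans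
    (QuotientGroup.quotientMulEquivOfEq hker)⟩

lemma nonempty_gal_mulEquiv {p : Polynomial K} (hp : (p.map (algebraMap K L)).Splits) {r : V → L}
    (hroot : p.rootSet L = Set.range r)
    (hinv : ∀ (g : G) (P : MvPolynomial V K), MvPolynomial.aeval r P = 0 →
      MvPolynomial.aeval (fun v ↦ r (g • v)) P = 0)
    (hfix : ∀ P : MvPolynomial V K,
      (∀ g : G, MvPolynomial.aeval (fun v ↦ r (g • v)) P = MvPolynomial.aeval r P) →
      ∃ c : K, MvPolynomial.aeval r P = algebraMap K L c)
    (Z : Subgroup G) [Z.Normal] (hZ : ∀ g, g ∈ Z ↔ ∀ v, r (g • v) = r v) :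
    Nonempty (p.Gal ≃* G ⧸ Z) := by
  set E := IntermediateField.adjoin K (p.rootSet L)
  have : p.IsSplittingField K E := IntermediateField.adjoin_rootSet_isSplittingField hp
  have : FiniteDimensional K E := Polynomial.IsSplittingField.finiteDimensional E p
  obtain ⟨s, hs⟩ : ∃ s : V → E, ∀ v, (s v : L) = r v :=
    ⟨fun v ↦ ⟨r v, IntermediateField.subset_adjoin _ _ (hroot ▸ Set.mem_range_self v)⟩,
      fun _ ↦ rfl⟩
  have hval (t : V → V) (P : MvPolynomial V K) :
      ((MvPolynomial.aeval (fun v ↦ s (t v)) P : E) : L) =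
        MvPolynomial.aeval (fun v ↦ r (t v)) P := by
    rw [← IntermediateField.coe_val, ← AlgHom.comp_apply, MvPolynomial.comp_aeval]
    simp only [IntermediateField.coe_val, hs]
  have hsurj : Function.Surjective (MvPolynomial.aeval (R := K) s) := by
    intro x
    have hx : x.1 ∈ (MvPolynomial.aeval (R := K) r).range := by
      rw [← Algebra.adjoin_range_eq_range_aeval, ← hroot,
        ← IntermediateField.adjoin_toSubalgebra_of_isAlgebraic fun x ↦ isAlgebraic_of_mem_rootSet]
      exact x.2
    obtain ⟨P, hP⟩ := hx
    exact ⟨P, Subtype.ext ((hval id P).trans hP)⟩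
  obtain ⟨e⟩ := nonempty_algEquiv_mulEquiv hsurj
    (fun g P hP ↦ Subtype.ext ((hval (g • ·) P).trans
      (hinv g P ((hval id P).symm.trans (congr_arg Subtype.val hP)))))
    (fun P hP ↦ (hfix P fun g ↦ by
      rw [← hval (g • ·), hP g]
      exact hval id P).imp fun c hc ↦ Subtype.ext ((hval id P).trans hc))
    Z (fun g ↦ by simp only [hZ, ← Subtype.val_inj, hs])
  exact ⟨(AlgEquiv.autCongr (Polynomial.IsSplittingField.algEquiv E p).symm).trans e⟩

variable {A : Type*} [CommRing A] [Algebra A K] [IsFractionRing A K]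

lemma exists_C_mul_eq_map (P : MvPolynomial V K) : ∃ b : A, b ≠ 0 ∧ ∃ Q : MvPolynomial V A,
    MvPolynomial.C (algebraMap A K b) * P = Q.map (algebraMap A K) := by
  have : Nontrivial A := (algebraMap A K).domain_nontrivial
  let := MvPolynomial.algebraMvPolynomial (R := A) (S := K) (σ := V)
  obtain ⟨⟨Q, _, b, hb, rfl⟩, h⟩ :=
    IsLocalization.surj ((nonZeroDivisors A).map (MvPolynomial.C (σ := V))) P
  refine ⟨b, nonZeroDivisors.ne_zero hb, Q, ?_⟩
  rw [mul_comm, ← MvPolynomial.map_C]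
  exact h

theorem nonempty_gal_mulEquiv_of_isFractionRing [Algebra A L] [IsScalarTower A K L]
    {p : Polynomial K} (hp : (p.map (algebraMap K L)).Splits) {r : V → L}
    (hroot : p.rootSet L = Set.range r)
    (hinv : ∀ (g : G) (P : MvPolynomial V A), MvPolynomial.aeval r P = 0 →
      MvPolynomial.aeval (fun v ↦ r (g • v)) P = 0)
    (hfix : ∀ P : MvPolynomial V A,
      (∀ g : G, MvPolynomial.aeval (fun v ↦ r (g • v)) P = MvPolynomial.aeval r P) →
      ∃ c : A, MvPolynomial.aeval r P = algebraMap A L c)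
    (Z : Subgroup G) [Z.Normal] (hZ : ∀ g, g ∈ Z ↔ ∀ v, r (g • v) = r v) :
    Nonempty (p.Gal ≃* G ⧸ Z) := by
  have aeval_eq {b : A} {P : MvPolynomial V K} {Q : MvPolynomial V A}
      (h : MvPolynomial.C (algebraMap A K b) * P = Q.map (algebraMap A K)) (s : V → L) :
      MvPolynomial.aeval s Q = algebraMap A L b * MvPolynomial.aeval s P := by
    rw [← MvPolynomial.aeval_map_algebraMap K, ← h, map_mul, MvPolynomial.aeval_C,
      ← IsScalarTower.algebraMap_apply]
  have hinj : Function.Injective (algebraMap A L) := by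
    rw [IsScalarTower.algebraMap_eq A K L]
    exact (algebraMap K L).injective.comp (IsFractionRing.injective A K)
  have ne_zero {b : A} (hb : b ≠ 0) : algebraMap A L b ≠ 0 :=
    (map_ne_zero_iff _ hinj).2 hb
  refine nonempty_gal_mulEquiv hp hroot (fun g P hP ↦ ?_) (fun P hP ↦ ?_) Z hZ
  · obtain ⟨b, hb, Q, hQ⟩ := exists_C_mul_eq_map (A := A) P
    have h := hinv g Q (by rw [aeval_eq hQ, hP, mul_zero])
    rw [aeval_eq hQ] at h
    exact (mul_eq_zero.1 h).resolve_left (ne_zero hb)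
  · obtain ⟨b, hb, Q, hQ⟩ := exists_C_mul_eq_map (A := A) P
    obtain ⟨c, hc⟩ := hfix Q fun g ↦ by rw [aeval_eq hQ, aeval_eq hQ, hP]
    refine ⟨algebraMap A K c / algebraMap A K b, ?_⟩
    rw [map_div₀, ← IsScalarTower.algebraMap_apply, ← IsScalarTower.algebraMap_apply, ← hc,
      aeval_eq hQ, mul_div_cancel_left₀ _ (ne_zero hb)]

end Galois

/-! ### Relations between the conjugates of `j` -/

section GLTwo

variable {N : ℕ}

lemma det_diagGL {R : Type*} [CommRing R] (u : Rˣ) : GeneralLinearGroup.det (diagGL u) = u :=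
  Units.ext (by
    rw [GeneralLinearGroup.val_det_apply, coe_diagGL, det_fin_two_of, one_mul, zero_mul, sub_zero])

lemma det_redGL (γ : SL(2, ℤ)) : GeneralLinearGroup.det (redGL γ : GL (Fin 2) (ZMod N)) = 1 :=
  Units.ext (SpecialLinearGroup.map (Int.castRingHom (ZMod N)) γ).2

lemma exists_redGL_eq [NeZero N] {g : GL (Fin 2) (ZMod N)} (hg : GeneralLinearGroup.det g = 1) :
    ∃ γ, redGL γ = g := by
  obtain ⟨γ, hγ⟩ := specialLinearGroup_map_intCast_surjective ⟨g.val, congr_arg Units.val hg⟩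
  exact ⟨γ, Units.ext (congr_arg Subtype.val hγ)⟩

lemma exists_eq_diagGL_mul_redGL [NeZero N] (g : GL (Fin 2) (ZMod N)) :
    ∃ γ, g = diagGL (GeneralLinearGroup.det g) * redGL γ := by
  obtain ⟨γ, hγ⟩ : ∃ γ, redGL γ = (diagGL (GeneralLinearGroup.det g))⁻¹ * g :=
    exists_redGL_eq (by rw [map_mul, map_inv, det_diagGL, inv_mul_cancel])
  exact ⟨γ, by rw [hγ, mul_inv_cancel_left]⟩

lemma mem_center_of_forall_unit_smul {R : Type*} [CommRing R] {h : GL (Fin 2) R}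
    (H : ∀ v : Fin 2 → R, IsCoprime (v 0) (v 1) → ∃ u : Rˣ, v ᵥ* h.val = (u : R) • v) :
    h ∈ Subgroup.center (GL (Fin 2) R) := by
  rw [GeneralLinearGroup.mem_center_iff_val_mem_range_scalar]
  obtain ⟨a, ha⟩ := H ![1, 0] isCoprime_one_left
  obtain ⟨b, hb⟩ := H ![0, 1] isCoprime_one_right
  obtain ⟨c, hc⟩ := H ![1, 1] isCoprime_one_right
  have h01 : h.val 0 1 = 0 := by simpa [vecMul, dotProduct] using congr_fun ha 1
  have h10 : h.val 1 0 = 0 := by simpa [vecMul, dotProduct] using congr_fun hb 0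
  have h00 : h.val 0 0 = c := by simpa [vecMul, dotProduct, h10] using congr_fun hc 0
  have h11 : h.val 1 1 = c := by simpa [vecMul, dotProduct, h01] using congr_fun hc 1
  refine ⟨c, ?_⟩
  ext i j
  fin_cases i <;> fin_cases j <;> simp [h00, h01, h10, h11]

lemma exists_unit_smul_of_mem_center {n R : Type*} [Fintype n] [DecidableEq n] [Nonempty n]
    [CommRing R] {h : GL n R} (hh : h ∈ Subgroup.center (GL n R)) :
    ∃ u : Rˣ, ∀ v : n → R, v ᵥ* h.val = (u : R) • v := by
  obtain ⟨x, hx⟩ := GeneralLinearGroup.mem_center_iff_val_mem_range_scalar.1 hh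
  have hu : IsUnit x := by
    have hdet : IsUnit (scalar n x).det := hx ▸ h.isUnit.map detMonoidHom
    rw [scalar_apply, det_diagonal, Finset.prod_const] at hdet
    exact (isUnit_pow_iff (Finset.card_ne_zero.2 Finset.univ_nonempty)).1 hdet
  refine ⟨hu.unit, fun v ↦ ?_⟩
  rw [← hx, scalar_apply, ← smul_one_eq_diagonal, vecMul_smul, vecMul_one, hu.unit_spec]

lemma forall_smul_eq_iff_mem_center (g : GL (Fin 2) (ZMod N)) :
    (∀ v : UnimodularRow N, ∃ u : (ZMod N)ˣ, (g • v).1 = (u : ZMod N) • v.1) ↔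
      g ∈ Subgroup.center (GL (Fin 2) (ZMod N)) := by
  rw [← inv_mem_iff]
  refine ⟨fun H ↦ mem_center_of_forall_unit_smul fun v hv ↦ H ⟨v, hv⟩, fun h v ↦ ?_⟩
  obtain ⟨u, hu⟩ := exists_unit_smul_of_mem_center h
  exact ⟨u, hu v.1⟩

lemma range_toGL {n R : Type*} [Fintype n] [DecidableEq n] [CommRing R] :
    (SpecialLinearGroup.toGL : SpecialLinearGroup n R →* GL n R).range =
      (GeneralLinearGroup.det : GL n R →* Rˣ).ker := by
  ext g
  rw [MonoidHom.mem_ker]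
  constructor
  · rintro ⟨s, rfl⟩
    exact Units.ext s.2
  · exact fun hg ↦ ⟨⟨g, congr_arg Units.val hg⟩, Units.ext rfl⟩

end GLTwo

section Relations

variable {ι F k : Type*} [Field F] [Field k] [Algebra F k] {N : ℕ} [NeZero N]

/-- The value of a polynomial over `F[j]` at the functions `jRow (s i)`. -/
def evalJRow [Algebra F ℂ] (s : ι → UnimodularRow N) (P : MvPolynomial ι (Polynomial F)) :
    ℍ → ℂ := fun τ ↦
  P.eval₂ (Polynomial.aeval (R := F) (jFunction τ) : Polynomial F →+* ℂ) fun i ↦ jRow (s i) τ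

/-- The value of a polynomial over `F[j]` at the Laurent series of the functions `jRow (s i)`. -/
def evalRowSeries (ζ : k) (s : ι → UnimodularRow N) (P : MvPolynomial ι (Polynomial F)) :
    LaurentSeries k :=
  P.eval₂ (evalJ F k N : Polynomial F →+* LaurentSeries k) fun i ↦ rowSeries ζ (s i)

variable (s : ι → UnimodularRow N) (P : MvPolynomial ι (Polynomial F))

lemma evalJRow_smul [Algebra F ℂ] (γ : SL(2, ℤ)) (τ : ℍ) :
    evalJRow s P (γ • τ) = evalJRow ((redGL γ : GL (Fin 2) (ZMod N))⁻¹ • s) P τ := by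
  simp only [evalJRow, jFunction_smul, jRow_smul, Pi.smul_apply]

variable [Algebra k ℂ] {ζ : k}

variable (hζ : algebraMap k ℂ ζ = Complex.exp (2 * Real.pi * Complex.I / N))

include hζ

lemma mapCoeff_evalRowSeries {σ : k ≃ₐ[F] k} {u : (ZMod N)ˣ}
    (hσ : σ ζ = ζ ^ (u : ZMod N).val) :
    mapCoeff (σ : k →+* k) (evalRowSeries ζ s P) = evalRowSeries ζ ((diagGL u)⁻¹ • s) P := by
  rw [evalRowSeries, MvPolynomial.hom_eval₂]
  refine congr_arg₂ (fun f r ↦ MvPolynomial.eval₂ f r P) ?_ ?_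
  · exact RingHom.ext fun Q ↦ mapCoeff_evalJ σ Q
  · exact funext fun i ↦ mapCoeff_rowSeries hζ (σ := (σ : k →+* k)) hσ (s i)

variable [Algebra F ℂ] [IsScalarTower F k ℂ]

lemma hasLaurentExpansion_evalJRow :
    HasLaurentExpansion N (evalJRow s P) (evalRowSeries ζ s P) := by
  unfold evalJRow evalRowSeries
  induction P using MvPolynomial.induction_on with
  | C a =>
    simp only [MvPolynomial.eval₂_C]
    exact hasLaurentExpansion_evalJ (NeZero.ne N) a
  | add P Q hP hQ =>
    simp only [MvPolynomial.eval₂_add]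
    exact hP.add hQ
  | mul_X P i hP =>
    simp only [MvPolynomial.eval₂_mul, MvPolynomial.eval₂_X]
    exact hP.mul (hasLaurentExpansion_jRow hζ (s i))

variable {s P}

lemma evalRowSeries_redGL_smul_eq_zero (γ : SL(2, ℤ)) (hP : evalRowSeries ζ s P = 0) :
    evalRowSeries ζ ((redGL γ : GL (Fin 2) (ZMod N))⁻¹ • s) P = 0 := by
  have hN : (0 : ℝ) < N := Nat.cast_pos.2 (NeZero.pos N)
  have hzero := ((hasLaurentExpansion_evalJRow s P hζ).eq_zero_iff hN).2 hP
  refine ((hasLaurentExpansion_evalJRow _ P hζ).eq_zero_iff hN).1 (funext fun τ ↦ ?_)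
  rw [← evalJRow_smul, hzero, Pi.zero_apply, Pi.zero_apply]

theorem evalRowSeries_smul_eq_zero {g : GL (Fin 2) (ZMod N)}
    (hg : GeneralLinearGroup.det g ∈
      ((isPrimitiveRoot_of_algebraMap_eq_exp hζ).autToPow F).range)
    (hP : evalRowSeries ζ s P = 0) : evalRowSeries ζ (g • s) P = 0 := by
  obtain ⟨γ, hγ⟩ := exists_eq_diagGL_mul_redGL g⁻¹
  obtain ⟨σ, hσ⟩ := inv_mem hg
  rw [map_inv, ← hσ] at hγ
  have hdiag := mapCoeff_evalRowSeries s P hζ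
    ((isPrimitiveRoot_of_algebraMap_eq_exp hζ).autToPow_spec F σ).symm
  rw [hP, map_zero] at hdiag
  rw [← inv_inv g, hγ, _root_.mul_inv_rev, mul_smul]
  exact evalRowSeries_redGL_smul_eq_zero hζ γ hdiag.symm

theorem exists_evalJ_eq_evalRowSeries [IsGalois F k]
    (hP : ∀ g : GL (Fin 2) (ZMod N), GeneralLinearGroup.det g ∈
      ((isPrimitiveRoot_of_algebraMap_eq_exp hζ).autToPow F).range →
        evalRowSeries ζ (g • s) P = evalRowSeries ζ s P) :
    ∃ Q : Polynomial F, evalJ F k N Q = evalRowSeries ζ s P := by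
  refine exists_evalJ_eq (NeZero.ne N) (hasLaurentExpansion_evalJRow s P hζ) (fun γ τ ↦ ?_)
    fun σ ↦ ?_
  · have hexp := hasLaurentExpansion_evalJRow ((redGL γ : GL (Fin 2) (ZMod N))⁻¹ • s) P hζ
    rw [hP _ (by rw [map_inv, det_redGL, inv_one]; exact one_mem _)] at hexp
    rw [evalJRow_smul]
    exact congr_fun (hexp.unique_left (Nat.cast_pos.2 (NeZero.pos N))
      (hasLaurentExpansion_evalJRow s P hζ)) τ
  · rw [mapCoeff_evalRowSeries s P hζ
      ((isPrimitiveRoot_of_algebraMap_eq_exp hζ).autToPow_spec F σ).symm]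
    exact hP _ (by rw [map_inv, det_diagGL]; exact inv_mem ⟨σ, rfl⟩)

end Relations

/-! ### The polynomial with roots the conjugates of `j` -/

section GenericMonic

variable {V : Type*} [Fintype V]

/-- The generic monic polynomial with roots indexed by `V`. Evaluating its coefficients expresses
the coefficients of a product of linear factors as polynomials in the roots. -/
def genericMonic (R V : Type*) [CommRing R] [Fintype V] : Polynomial (MvPolynomial V R) :=
  ∏ v, (.X - .C (.X v))

lemma eval₂_coeff_genericMonic {R S : Type*} [CommRing R] [CommRing S] (f : R →+* S) (r : V → S)
    (i : ℕ) : ((genericMonic R V).coeff i).eval₂ f r =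
      (∏ v, (Polynomial.X - Polynomial.C (r v))).coeff i := by
  rw [← MvPolynomial.coe_eval₂Hom, ← Polynomial.coeff_map, genericMonic, Polynomial.map_prod]
  simp

end GenericMonic

section RowPolynomial

variable {F k : Type*} [Field F] [Field k] [Algebra F k] [Algebra k ℂ] [Algebra F ℂ]
  [IsScalarTower F k ℂ] {N : ℕ} [NeZero N] {ζ : k}

instance : Fintype (UnimodularRow N) := Fintype.ofFinite _

variable (hζ : algebraMap k ℂ ζ = Complex.exp (2 * Real.pi * Complex.I / N))

include hζ

lemma hasLaurentExpansion_coeff_prod (i : ℕ) : HasLaurentExpansion N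
    (fun τ ↦ (∏ v : UnimodularRow N, (Polynomial.X - Polynomial.C (jRow v τ))).coeff i)
    ((∏ v : UnimodularRow N, (Polynomial.X - Polynomial.C (rowSeries ζ v))).coeff i) := by
  have h := hasLaurentExpansion_evalJRow id ((genericMonic (Polynomial k) _).coeff i) hζ
  unfold evalJRow evalRowSeries at h
  simpa only [eval₂_coeff_genericMonic, id] using h

lemma map_evalJ_eq_prod_iff {W : Polynomial (Polynomial F)} :
    W.map (evalJ F k N : Polynomial F →+* LaurentSeries k) =
        ∏ v : UnimodularRow N, (Polynomial.X - Polynomial.C (rowSeries ζ v)) ↔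
      ∀ τ, W.map (Polynomial.aeval (jFunction τ) : Polynomial F →ₐ[F] ℂ).toRingHom =
        ∏ v : UnimodularRow N, (Polynomial.X - Polynomial.C (jRow v τ)) := by
  have hN : (0 : ℝ) < N := Nat.cast_pos.2 (NeZero.pos N)
  simp only [Polynomial.ext_iff, Polynomial.coeff_map]
  rw [forall_comm]
  refine forall_congr' fun i ↦ ?_
  have hW := hasLaurentExpansion_evalJ (k := k) (NeZero.ne N) (W.coeff i)
  have hprod := hasLaurentExpansion_coeff_prod hζ i
  exact ⟨fun h ↦ congr_fun (hW.unique_left hN (by rwa [← h] at hprod)), fun h ↦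
    hW.unique_right hN (by rwa [← funext h] at hprod)⟩

lemma exists_map_evalJ_eq_prod [IsGalois F k] : ∃ W : Polynomial (Polynomial F),
    W.map (evalJ F k N : Polynomial F →+* LaurentSeries k) =
      ∏ v : UnimodularRow N, (Polynomial.X - Polynomial.C (rowSeries ζ v)) := by
  rw [← Polynomial.mem_lifts, Polynomial.lifts_iff_coeff_lifts]
  intro i
  obtain ⟨Q, hQ⟩ := exists_evalJ_eq_evalRowSeries (F := F) (s := id)
    (P := (genericMonic _ _).coeff i) hζ fun g _ ↦ by
      rw [evalRowSeries, evalRowSeries, eval₂_coeff_genericMonic, eval₂_coeff_genericMonic]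
      congr 1
      exact Fintype.prod_equiv (MulAction.toPerm g) _ _ fun _ ↦ rfl
  exact ⟨Q, hQ.trans (eval₂_coeff_genericMonic _ _ _)⟩

end RowPolynomial

section AlgebraicClosure

variable (F : Type*) [Field F] [Algebra F ℂ] (N : ℕ) [NeZero N]

instance : IsGalois F (algebraicClosure F ℂ) := by
  have : CharZero F := (algebraMap F ℂ).charZero
  have : Normal F (algebraicClosure F ℂ) := IsAlgClosure.normal F _
  exact {}

/-- The root of unity `exp (2πi/N)` in the algebraic closure of `F` in `ℂ`. -/
def zetaN : algebraicClosure F ℂ :=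
  ⟨Complex.exp (2 * Real.pi * Complex.I / N), mem_algebraicClosure_iff.2
    ((Complex.isPrimitiveRoot_exp N (NeZero.ne N)).isIntegral (NeZero.pos N)).tower_top.isAlgebraic⟩

lemma algebraMap_zetaN : algebraMap (algebraicClosure F ℂ) ℂ (zetaN F N) =
    Complex.exp (2 * Real.pi * Complex.I / N) := rfl

lemma isPrimitiveRoot_zetaN : IsPrimitiveRoot (zetaN F N) N :=
  isPrimitiveRoot_of_algebraMap_eq_exp (algebraMap_zetaN F N)

lemma exists_map_aeval_jFunction_eq_prod : ∃ W : Polynomial (Polynomial F),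
    ∀ τ, W.map (Polynomial.aeval (jFunction τ) : Polynomial F →ₐ[F] ℂ).toRingHom =
      ∏ v : UnimodularRow N, (Polynomial.X - Polynomial.C (jRow v τ)) :=
  (exists_map_evalJ_eq_prod (algebraMap_zetaN F N)).imp fun _ ↦
    (map_evalJ_eq_prod_iff (algebraMap_zetaN F N)).1

end AlgebraicClosure

/-! ### The correspondence defined by the modular polynomial -/

section Correspondence

lemma smul_eq_smul_of_coe_eq_smul {g h : GL (Fin 2) ℝ} (hg : 0 < g.det.val) (hh : 0 < h.det.val)
    {c : ℝ} (hc : g.val = c • h.val) (τ : ℍ) : g • τ = h • τ := by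
  have hc0 : (c : ℂ) ≠ 0 := by
    rintro h0
    rw [GeneralLinearGroup.val_det_apply, hc, Complex.ofReal_eq_zero.1 h0, zero_smul,
      det_zero] at hg
    exact lt_irrefl _ hg
  refine UpperHalfPlane.ext ?_
  rw [coe_smul_of_det_pos hg, coe_smul_of_det_pos hh, ← mul_div_mul_left (num h τ) (denom h τ) hc0]
  congr 1 <;> simp [num, denom, hc] <;> ring

variable {A : Matrix (Fin 2) (Fin 2) ℤ}

lemma det_adjugate_pos (hA : 0 < A.det) : 0 < A.adjugate.det := by
  rwa [det_adjugate, Fintype.card_fin, pow_one]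

lemma intGL_adjugate_smul (hA : 0 < A.det) (τ : ℍ) :
    intGL A.adjugate (det_adjugate_pos hA) • intGL A hA • τ = τ := by
  have hmul : 0 < (A.adjugate * A).det := by
    rw [det_mul]
    exact mul_pos (det_adjugate_pos hA) hA
  rw [← intGL_mul_smul (det_adjugate_pos hA) hA hmul]
  refine (smul_eq_smul_of_coe_eq_smul (h := 1) (c := A.det) (det_intGL_pos hmul) ?_ ?_ τ).trans
    (one_smul _ τ)
  · rw [map_one]
    exact one_pos
  · rw [coe_intGL, adjugate_mul, Units.val_one, Matrix.map_smul' _ _ _ Int.cast_mul,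
      Matrix.map_one _ Int.cast_zero Int.cast_one]

lemma IsPrimitiveIntMatrix.adjugate (hA : IsPrimitiveIntMatrix A) :
    IsPrimitiveIntMatrix A.adjugate := by
  unfold IsPrimitiveIntMatrix at *
  rw [← hA, adjugate_fin_two]
  simp [Int.gcd_def, Nat.gcd_comm, Nat.gcd_left_comm]

lemma gqSmul_eq_intGL_smul (hA : 0 < A.det) {g : GQ} {c : ℚ}
    (hg : (g.out : GL (Fin 2) ℚ).val = c • A.map (fun x => (x : ℚ))) (τ : ℍ) :
    gqSmul g τ = intGL A hA • τ := by
  refine smul_eq_smul_of_coe_eq_smul (toGLPosR g.out).2 (det_intGL_pos hA) (c := c) ?_ τ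
  change (g.out : GL (Fin 2) ℚ).val.map (algebraMap ℚ ℝ) = _
  rw [hg, coe_intGL]
  ext i j
  simp

lemma exists_eq_smul_one_of_mem_center {h : GL2QPos} (hh : h ∈ Subgroup.center GL2QPos) :
    ∃ c : ℚ, (h : GL (Fin 2) ℚ).val = c • 1 := by
  have commute (γ : SL(2, ℤ)) : γ.val.map (Int.cast : ℤ → ℚ) * (h : GL (Fin 2) ℚ).val =
      (h : GL (Fin 2) ℚ).val * γ.val.map (Int.cast : ℤ → ℚ) :=
    congr_arg (fun x : GL2QPos ↦ (x : GL (Fin 2) ℚ).val)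
      (Subgroup.mem_center_iff.1 hh (sl2ZtoGLQ γ))
  have hT := commute ModularGroup.T
  have hS := commute ModularGroup.S
  generalize (h : GL (Fin 2) ℚ).val = B at hT hS
  have h10 : B 1 0 = 0 := by
    simpa [ModularGroup.T, mul_apply] using congr_fun₂ hT 0 0
  have h11 : B 1 1 = B 0 0 := by
    simpa [ModularGroup.T, mul_apply, add_comm (B 0 1)] using congr_fun₂ hT 0 1
  have h01 : B 0 1 = 0 := by
    simpa [ModularGroup.S, mul_apply, h10] using (congr_fun₂ hS 0 0).symm
  refine ⟨B 0 0, ?_⟩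
  ext i j
  fin_cases i <;> fin_cases j <;> simp [h10, h11, h01]

lemma exists_gq_out_eq_smul (hA : 0 < A.det) : ∃ (g : GQ) (c : ℚ),
    (g.out : GL (Fin 2) ℚ).val = c • A.map (fun x => (x : ℚ)) := by
  have hpos : 0 < (A.map (fun x => (x : ℚ))).det := by
    rw [det_map_intCast]
    exact_mod_cast hA
  let B : GL2QPos := ⟨GeneralLinearGroup.mkOfDetNeZero _ hpos.ne', hpos⟩
  obtain ⟨h, hh⟩ := QuotientGroup.mk_out_eq_mul (Subgroup.center GL2QPos) B
  obtain ⟨c, hc⟩ := exists_eq_smul_one_of_mem_center h.2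
  refine ⟨QuotientGroup.mk B, c, ?_⟩
  rw [hh]
  change _ * ((h : GL2QPos) : GL (Fin 2) ℚ).val = _
  rw [hc, Matrix.mul_smul, mul_one]
  rfl

variable {N : ℕ} [NeZero N]

lemma exists_jRow_eq_iff (z w : ℂ) :
    (∃ (τ : ℍ) (v : UnimodularRow N), jFunction τ = w ∧ jRow v τ = z) ↔
      ∃ (τ : ℍ) (g : GQ), g ∈ GQdet N ∧ jFunction τ = z ∧ jFunction (gqSmul g τ) = w := by
  constructor
  · rintro ⟨τ, v, rfl, rfl⟩
    have hA := (rowTriangular v).adapted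
    have hadj := det_adjugate_pos hA.det_pos
    obtain ⟨g, c, hg⟩ := exists_gq_out_eq_smul hadj
    refine ⟨intGL _ hA.det_pos • τ, g, ⟨_, (hA.isPrimitiveIntMatrix v.2).adjugate, ?_, c, hg⟩,
      rfl, ?_⟩
    · rw [det_adjugate, Fintype.card_fin, pow_one, hA.1]
    · rw [gqSmul_eq_intGL_smul hadj hg, intGL_adjugate_smul]
  · rintro ⟨τ, g, ⟨A, hA, hd, c, hc⟩, rfl, rfl⟩
    have hpos : 0 < A.det := hd ▸ Nat.cast_pos.2 (NeZero.pos N)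
    obtain ⟨v, hv, hAv⟩ := hA.adjugate.exists_adapted (N := N)
      (by rwa [det_adjugate, Fintype.card_fin, pow_one])
    refine ⟨gqSmul g τ, ⟨v, hv⟩, rfl, ?_⟩
    rw [← Adapted.jFunction_eq_jRow (v := ⟨v, hv⟩) hAv, gqSmul_eq_intGL_smul hpos hc,
      intGL_adjugate_smul]

end Correspondence

/-! ### The modular polynomial -/

section Bivariate

variable {R S : Type*} [CommRing R] [CommRing S] [Algebra R S]

/-- The polynomial in two variables (the root and the parameter) given by a polynomial over a
polynomial ring. -/
def biPoly (W : Polynomial (Polynomial R)) : MvPolynomial (Fin 2) R :=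
  W.eval₂ (Polynomial.aeval (R := R) (MvPolynomial.X (R := R) (1 : Fin 2))).toRingHom
    (MvPolynomial.X 0)

lemma aeval_biPoly (x y : S) (W : Polynomial (Polynomial R)) :
    MvPolynomial.aeval ![x, y] (biPoly W) =
      (W.map (Polynomial.aeval y : Polynomial R →ₐ[R] S).toRingHom).eval x := by
  rw [biPoly, ← AlgHom.coe_toRingHom, Polynomial.hom_eval₂, Polynomial.eval_map]
  congr 1
  · exact Polynomial.ringHom_ext (fun a ↦ by simp) (by simp)
  · simp

lemma aeval_biPoly_X_C (y : S) (W : Polynomial (Polynomial R)) :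
    MvPolynomial.aeval ![Polynomial.X, Polynomial.C y] (biPoly W) =
      W.map (Polynomial.aeval y : Polynomial R →ₐ[R] S).toRingHom := by
  have h : (Polynomial.aeval (Polynomial.C y) : Polynomial R →ₐ[R] Polynomial S).toRingHom =
      Polynomial.C.comp (Polynomial.aeval y : Polynomial R →ₐ[R] S).toRingHom :=
    Polynomial.ringHom_ext (fun a ↦ by simp) (by simp)
  rw [aeval_biPoly, h, ← Polynomial.map_map, Polynomial.eval_map, Polynomial.eval₂_C_X]

end Bivariate

lemma exists_dvd_pow_of_forall_aeval_eq_zero {σ k : Type*} (K : Type*) [Finite σ] [Field k]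
    [Field K] [Algebra k K] [IsAlgClosed K] {P Q : MvPolynomial σ k}
    (h : ∀ x : σ → K, MvPolynomial.aeval x P = 0 → MvPolynomial.aeval x Q = 0) :
    ∃ n : ℕ, P ∣ Q ^ n := by
  suffices hQ : Q ∈ (Ideal.span {P}).radical from
    hQ.imp fun _ ↦ Ideal.mem_span_singleton.1
  rw [← MvPolynomial.vanishingIdeal_zeroLocus_eq_radical (K := K), MvPolynomial.zeroLocus_span,
    MvPolynomial.mem_vanishingIdeal_iff]
  exact fun x hx ↦ h x (hx P rfl)

lemma map_modularPolyOneVar {F : Type} [Field F] {N : ℕ} {M : Type*} [Field M] (f : RatFunc F →+* M)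
    {φ : MvPolynomial (Fin 2) ℤ →+* Polynomial M} (h₀ : φ (MvPolynomial.X 0) = Polynomial.X)
    (h₁ : φ (MvPolynomial.X 1) = Polynomial.C (f RatFunc.X)) :
    (modularPolyOneVar F N).map f = φ (modularPoly N) := by
  suffices h : (Polynomial.mapRingHom f).comp
      (MvPolynomial.aeval ![Polynomial.X, Polynomial.C RatFunc.X]).toRingHom = φ from
    RingHom.congr_fun h (modularPoly N)
  refine MvPolynomial.ringHom_ext' (Subsingleton.elim _ _) fun i ↦ ?_
  fin_cases i
  · simpa using h₀.symm
  · simpa using h₁.symm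

section ModularPoly

variable {N : ℕ} [NeZero N] {W : Polynomial (Polynomial ℚ)}
  (hW : ∀ τ, W.map (Polynomial.aeval (jFunction τ) : Polynomial ℚ →ₐ[ℚ] ℂ).toRingHom =
    ∏ v : UnimodularRow N, (Polynomial.X - Polynomial.C (jRow v τ)))

include hW

lemma aeval_biPoly_eq_zero_iff (z w : ℂ) : MvPolynomial.aeval ![z, w] (biPoly W) = 0 ↔
    ∃ (τ : ℍ) (g : GQ), g ∈ GQdet N ∧ jFunction τ = z ∧ jFunction (gqSmul g τ) = w := by
  have eval_eq_zero_iff (τ : ℍ) : MvPolynomial.aeval ![z, jFunction τ] (biPoly W) = 0 ↔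
      ∃ v : UnimodularRow N, jRow v τ = z := by
    simp only [aeval_biPoly, hW, Polynomial.eval_prod, Finset.prod_eq_zero_iff, Finset.mem_univ,
      true_and, Polynomial.eval_sub, Polynomial.eval_X, Polynomial.eval_C, sub_eq_zero,
      @eq_comm _ z]
  rw [← exists_jRow_eq_iff]
  constructor
  · obtain ⟨τ, rfl⟩ := jFunction_surjective w
    rw [eval_eq_zero_iff]
    rintro ⟨v, hv⟩
    exact ⟨τ, v, rfl, hv⟩
  · rintro ⟨τ, v, rfl, hv⟩
    exact (eval_eq_zero_iff τ).2 ⟨v, hv⟩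

lemma biPoly_ne_zero : biPoly W ≠ 0 := by
  intro h
  have hprod := (aeval_biPoly_X_C (jFunction I) W).trans (hW I)
  rw [h, map_zero, eq_comm, Finset.prod_eq_zero_iff] at hprod
  obtain ⟨v, -, hv⟩ := hprod
  exact Polynomial.X_sub_C_ne_zero _ hv

lemma aeval_biPoly_jSubst {k : Type*} [Field k] [Algebra k ℂ] [CharZero k] {ζ : k}
    (hζ : algebraMap k ℂ ζ = Complex.exp (2 * Real.pi * Complex.I / N)) :
    MvPolynomial.aeval ![Polynomial.X, Polynomial.C (jSubst (1 : k) N)] (biPoly W) =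
      ∏ v : UnimodularRow N, (Polynomial.X - Polynomial.C (rowSeries ζ v)) :=
  (aeval_biPoly_X_C _ W).trans ((map_evalJ_eq_prod_iff hζ).2 hW)

omit hW

lemma aeval_modularPoly_eq_zero_iff (z w : ℂ) :
    MvPolynomial.aeval ![z, w] (modularPoly N) = 0 ↔
      ∃ (τ : ℍ) (g : GQ), g ∈ GQdet N ∧ jFunction τ = z ∧ jFunction (gqSmul g τ) = w := by
  have hex : ∃ P : MvPolynomial (Fin 2) ℤ, P ≠ 0 ∧ ∀ z w : ℂ,
      (MvPolynomial.aeval ![z, w]) P = 0 ↔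
        ∃ (τ : ℍ) (g : GQ), g ∈ GQdet N ∧ jFunction τ = z ∧ jFunction (gqSmul g τ) = w := by
    obtain ⟨W, hW⟩ := exists_map_aeval_jFunction_eq_prod ℚ N
    obtain ⟨b, hb, P, hP⟩ := exists_C_mul_eq_map (A := ℤ) (biPoly W)
    have hb' : algebraMap ℤ ℚ b ≠ 0 := Int.cast_ne_zero.2 hb
    refine ⟨P, ?_, fun z w ↦ ?_⟩
    · rintro rfl
      rw [map_zero, mul_eq_zero, map_eq_zero_iff _ (MvPolynomial.C_injective _ _)] at hP
      exact hP.elim hb' (biPoly_ne_zero hW)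
    · rw [← aeval_biPoly_eq_zero_iff hW, ← MvPolynomial.aeval_map_algebraMap ℚ, ← hP, map_mul,
        MvPolynomial.aeval_C, mul_eq_zero, map_eq_zero, or_iff_right hb']
  rw [modularPoly, dif_pos hex]
  exact hex.choose_spec.2 z w

variable {k : Type*} [Field k] [Algebra k ℂ] {ζ : k}
  (hζ : algebraMap k ℂ ζ = Complex.exp (2 * Real.pi * Complex.I / N))

include hζ

lemma exists_dvd_pow_map_modularPolyOneVar {F : Type} [Field F] {f : RatFunc F →+* LaurentSeries k}
    (hf : f RatFunc.X = jSubst 1 N) :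
    ∃ m n : ℕ,
      (modularPolyOneVar F N).map f ∣
        (∏ v : UnimodularRow N, (Polynomial.X - Polynomial.C (rowSeries ζ v))) ^ m ∧
      ∏ v : UnimodularRow N, (Polynomial.X - Polynomial.C (rowSeries ζ v)) ∣
        (modularPolyOneVar F N).map f ^ n := by
  have : CharZero k := (algebraMap k ℂ).charZero
  obtain ⟨W, hW⟩ := exists_map_aeval_jFunction_eq_prod ℚ N
  have aeval_eq_zero_iff (x : Fin 2 → ℂ) : MvPolynomial.aeval x (biPoly W) = 0 ↔
      MvPolynomial.aeval x ((modularPoly N).map (algebraMap ℤ ℚ)) = 0 := by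
    have hx : x = ![x 0, x 1] := by ext i; fin_cases i <;> rfl
    rw [hx, aeval_biPoly_eq_zero_iff hW, MvPolynomial.aeval_map_algebraMap,
      aeval_modularPoly_eq_zero_iff]
  obtain ⟨m, hm⟩ := exists_dvd_pow_of_forall_aeval_eq_zero ℂ fun x ↦ (aeval_eq_zero_iff x).2
  obtain ⟨n, hn⟩ := exists_dvd_pow_of_forall_aeval_eq_zero ℂ fun x ↦ (aeval_eq_zero_iff x).1
  let φ : MvPolynomial (Fin 2) ℚ →ₐ[ℚ] Polynomial (LaurentSeries k) :=
    MvPolynomial.aeval ![Polynomial.X, Polynomial.C (jSubst (1 : k) N)]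
  have map_eq : (modularPolyOneVar F N).map f = φ ((modularPoly N).map (algebraMap ℤ ℚ)) :=
    map_modularPolyOneVar f (φ := φ.toRingHom.comp (MvPolynomial.map (algebraMap ℤ ℚ)))
      (by simp [φ]) (by simp [φ, hf])
  rw [map_eq, ← aeval_biPoly_jSubst hW hζ]
  exact ⟨m, n, map_pow φ _ m ▸ map_dvd φ hm, map_pow φ _ n ▸ map_dvd φ hn⟩

lemma splits_map_modularPolyOneVar {F : Type} [Field F] {f : RatFunc F →+* LaurentSeries k}
    (hf : f RatFunc.X = jSubst 1 N) : ((modularPolyOneVar F N).map f).Splits := by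
  obtain ⟨m, -, hm, -⟩ := exists_dvd_pow_map_modularPolyOneVar hζ hf
  exact ((Polynomial.Splits.prod fun v _ ↦ .X_sub_C _).pow m).of_dvd
    (pow_ne_zero m (Finset.prod_ne_zero_iff.2 fun v _ ↦ Polynomial.X_sub_C_ne_zero _)) hm

lemma rootSet_modularPolyOneVar {F : Type} [Field F] [Algebra (RatFunc F) (LaurentSeries k)]
    (hX : algebraMap (RatFunc F) (LaurentSeries k) RatFunc.X = jSubst 1 N) :
    (modularPolyOneVar F N).rootSet (LaurentSeries k) =
      Set.range (rowSeries (N := N) ζ) := by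
  obtain ⟨m, n, hm, hn⟩ := exists_dvd_pow_map_modularPolyOneVar hζ hX
  set R := ∏ v : UnimodularRow N, (Polynomial.X - Polynomial.C (rowSeries ζ v)) with hR
  have hp : (modularPolyOneVar F N).map (algebraMap (RatFunc F) (LaurentSeries k)) ≠ 0 :=
    ne_zero_of_dvd_ne_zero (pow_ne_zero m (Finset.prod_ne_zero_iff.2 fun v _ ↦
      Polynomial.X_sub_C_ne_zero _)) hm
  have hroot (x : LaurentSeries k) :
      ((modularPolyOneVar F N).map (algebraMap (RatFunc F) _)).eval x = 0 ↔ R.eval x = 0 := by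
    constructor <;> intro hx
    · have h := Polynomial.eval_eq_zero_of_dvd_of_eval_eq_zero hm hx
      rw [Polynomial.eval_pow] at h
      exact eq_zero_of_pow_eq_zero h
    · have h := Polynomial.eval_eq_zero_of_dvd_of_eval_eq_zero hn hx
      rw [Polynomial.eval_pow] at h
      exact eq_zero_of_pow_eq_zero h
  ext x
  rw [Polynomial.mem_rootSet', and_iff_right hp, ← Polynomial.eval_map_algebraMap, hroot, hR]
  simp only [Polynomial.eval_prod, Finset.prod_eq_zero_iff, Polynomial.eval_sub,
    Polynomial.eval_X, Polynomial.eval_C, sub_eq_zero, Finset.mem_univ, true_and, Set.mem_range,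
    @eq_comm _ x]

end ModularPoly

/-! ### The Galois group -/

section CyclotomicCharacter

variable {F : Type*} [Field F] [Algebra F ℂ] {N : ℕ} [NeZero N]

lemma range_autToPow_zetaN_eq_top (h : Irreducible (Polynomial.cyclotomic N F)) :
    ((isPrimitiveRoot_zetaN F N).autToPow F).range = ⊤ := by
  have : CharZero F := (algebraMap F ℂ).charZero
  have hζ := isPrimitiveRoot_zetaN F N
  refine MonoidHom.range_eq_top.2 fun u ↦ ?_
  have hconj : IsConjRoot F (zetaN F N ^ (u : ZMod N).val) (zetaN F N) := by
    rw [IsConjRoot, ← hζ.minpoly_eq_cyclotomic_of_irreducible h,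
      ← (hζ.pow_of_coprime _ (ZMod.val_coe_unit_coprime u)).minpoly_eq_cyclotomic_of_irreducible h]
  obtain ⟨σ, hσ⟩ := isConjRoot_iff_exists_algEquiv.1 hconj
  refine ⟨σ, Units.ext (ZMod.val_injective N ?_)⟩
  exact hζ.pow_inj (ZMod.val_lt _) (ZMod.val_lt _) ((hζ.autToPow_spec F σ).trans hσ)

lemma range_autToPow_zetaN_eq_bot
    (h : zetaN F N ∈ Set.range (algebraMap F (algebraicClosure F ℂ))) :
    ((isPrimitiveRoot_zetaN F N).autToPow F).range = ⊥ := by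
  have hζ := isPrimitiveRoot_zetaN F N
  obtain ⟨z, hz⟩ := h
  refine MonoidHom.range_eq_bot_iff.2 (MonoidHom.ext fun σ ↦ ?_)
  have h_one : hζ.autToPow F σ = hζ.autToPow F 1 :=
    Units.ext (ZMod.val_injective N (hζ.pow_inj (ZMod.val_lt _) (ZMod.val_lt _) (by
      rw [hζ.autToPow_spec F, hζ.autToPow_spec F, ← hz, σ.commutes, AlgEquiv.one_apply])))
  rw [h_one, map_one, MonoidHom.one_apply]

lemma zetaN_Qcyc_mem_range (N : ℕ) [NeZero N] :
    zetaN Qcyc N ∈ Set.range (algebraMap Qcyc (algebraicClosure Qcyc ℂ)) := by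
  have hmem : Complex.exp (2 * Real.pi * Complex.I / N) ∈ Qcyc :=
    Subfield.subset_closure ⟨N, NeZero.pos N,
      (Complex.isPrimitiveRoot_exp N (NeZero.ne N)).pow_eq_one⟩
  exact ⟨⟨_, hmem⟩, rfl⟩

end CyclotomicCharacter

end JPaper

open JPaper in
/-- Here `autToPow` is the cyclotomic character modulo `N`, so the Galois group is the group of
matrices whose determinant is a value of that character, modulo scalars. -/
theorem galois_group_of_modular_cover_general (F : Type) [Field F] [Algebra F ℂ] {N : ℕ}
    [NeZero N] {G : Type*} [Group G] (ρ : G →* GL (Fin 2) (ZMod N))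
    (hρ : ρ.range = (((isPrimitiveRoot_zetaN F N).autToPow F).range).comap
      GeneralLinearGroup.det)
    (Z : Subgroup G) [Z.Normal] (hZ : (Subgroup.center (GL (Fin 2) (ZMod N))).comap ρ = Z) :
    Nonempty ((modularPolyOneVar F N).Gal ≃* G ⧸ Z) := by
  have hζ := algebraMap_zetaN F N
  have mem_range (g : G) : GeneralLinearGroup.det (ρ g) ∈
      ((isPrimitiveRoot_zetaN F N).autToPow F).range :=
    hρ.le ⟨g, rfl⟩
  let L := LaurentSeries (algebraicClosure F ℂ)
  let : Algebra (Polynomial F) L := (evalJ F (algebraicClosure F ℂ) N).toRingHom.toAlgebra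
  let : Algebra (RatFunc F) L :=
    (IsFractionRing.lift (evalJ_injective (F := F) (k := algebraicClosure F ℂ)
      (NeZero.ne N))).toAlgebra
  have : IsScalarTower (Polynomial F) (RatFunc F) L := .of_algebraMap_eq fun P ↦
    (IsFractionRing.lift_algebraMap (evalJ_injective (NeZero.ne N)) P).symm
  let : MulAction G (UnimodularRow N) := MulAction.compHom _ ρ
  have hX : algebraMap (RatFunc F) L RatFunc.X = jSubst 1 N := by
    rw [← RatFunc.algebraMap_X, ← IsScalarTower.algebraMap_apply]
    exact evalJ_X
  refine nonempty_gal_mulEquiv_of_isFractionRing (A := Polynomial F) (L := L)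
    (r := rowSeries (zetaN F N)) (splits_map_modularPolyOneVar hζ hX)
    (rootSet_modularPolyOneVar hζ hX) (fun g P ↦ ?_) (fun P hP ↦ ?_) Z fun g ↦ ?_
  · exact evalRowSeries_smul_eq_zero (s := id) hζ (mem_range g)
  · obtain ⟨Q, hQ⟩ := exists_evalJ_eq_evalRowSeries (s := id) (P := P) hζ fun g hg ↦ by
      obtain ⟨g, rfl⟩ := hρ.ge hg
      exact hP g
    exact ⟨Q, hQ.symm⟩
  · rw [← hZ, Subgroup.mem_comap, ← forall_smul_eq_iff_mem_center]
    refine forall_congr' fun v ↦ ?_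
    rw [eq_comm, rowSeries_eq_iff hζ]
    rfl

/-- for every `N ≥ 1` the extension `ℚ(j, {j∘g}_{g ∈ G_N}) / ℚ(j)` — i.e.
the splitting field of the modular polynomial `Φ_N(X, j)` over the rational function field
`ℚ(j)` — is Galois with Galois group isomorphic to `PGL₂(ℤ/Nℤ)`, and over
`ℚ^cyc(j)` the corresponding Galois group is isomorphic to `PSL₂(ℤ/Nℤ)`. -/
theorem galois_group_of_modular_cover (N : ℕ) (hN : 1 ≤ N) :
    Nonempty ((JPaper.modularPolyOneVar ℚ N).Gal ≃* JPaper.PGL2ZmodN N) ∧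
    Nonempty ((JPaper.modularPolyOneVar ↥JPaper.Qcyc N).Gal ≃* JPaper.PSL2ZmodN N) := by
  have : NeZero N := ⟨by omega⟩
  constructor
  · refine galois_group_of_modular_cover_general ℚ (.id _) ?_ _ (Subgroup.comap_id _)
    rw [JPaper.range_autToPow_zetaN_eq_top (Polynomial.cyclotomic.irreducible_rat hN),
      Subgroup.comap_top, MonoidHom.range_eq_top]
    exact Function.surjective_id
  · refine galois_group_of_modular_cover_general JPaper.Qcyc SpecialLinearGroup.toGL ?_ _
      (Subgroup.ext fun g ↦ SpecialLinearGroup.toGL_mem_center_iff g)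
    rw [JPaper.range_autToPow_zetaN_eq_bot (JPaper.zetaN_Qcyc_mem_range N), JPaper.range_toGL,
      MonoidHom.comap_bot]
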